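/- Let G be a simple graph on [n] whose edge ideal I = I(G) has almost maximal finite index, i.e., index(I) = pd(I) − 1. Then every induced cycle of length greater than 3 in the complement graph of G has length exactly index(I) + 3. -/

import Mathlib

open Finsupp

namespace EP

variable (K : Type) [Field K]

/-! ## Simplicial chains over a linearly ordered vertex set -/

variable {V : Type} [Fintype V] [DecidableEq V] [LinearOrder V]

/-- Boundary of a single (oriented) face, given as a finset. -/
noncomputable def bdFace (s : Finset V) : Finset V →₀ K :=
  ∑ v ∈ s, ((-1 : K) ^ ((s.filter (fun w => w < v)).card)) • Finsupp.single (s.erase v) 1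

/-- The simplicial boundary map on the free module on all finsets of vertices
(the augmented oriented chain complex, with the empty set playing the role of
the `(-1)`-dimensional face). -/
noncomputable def bdS : (Finset V →₀ K) →ₗ[K] (Finset V →₀ K) :=
  Finsupp.lsum K fun s => LinearMap.toSpanSingleton K (Finset V →₀ K) (bdFace K s)

/-- Chains supported on faces of a complex `Δ` having `k` vertices. -/
noncomputable def faceSpan (Δ : Set (Finset V)) (k : ℕ) : Submodule K (Finset V →₀ K) :=
  Submodule.span K {c | ∃ F ∈ Δ, F.card = k ∧ c = Finsupp.single F 1}

/-- Dimension of the `d`-th reduced simplicial homology of `Δ` over `K`. -/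
noncomputable def redHomRank (Δ : Set (Finset V)) (d : ℕ) : ℕ :=
  Module.finrank K ↥(faceSpan K Δ (d+1) ⊓ LinearMap.ker (bdS K)) -
    Module.finrank K
      ↥(Submodule.map (bdS K) (faceSpan K Δ (d+2)) ⊓
          (faceSpan K Δ (d+1) ⊓ LinearMap.ker (bdS K)))

/-- The flag complex of a graph: faces are the cliques. -/
def flagComplex (G : SimpleGraph V) : Set (Finset V) :=
  {F | ∀ i ∈ F, ∀ j ∈ F, i ≠ j → G.Adj i j}

/-- The flag complex of the induced subgraph of `G` on `W`. -/
def flagComplexOn (G : SimpleGraph V) (W : Finset V) : Set (Finset V) :=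
  {F | (F : Set V) ⊆ (W : Set V) ∧ ∀ i ∈ F, ∀ j ∈ F, i ≠ j → G.Adj i j}

/-- The induced subcomplex of `Δ` on a vertex subset `W`. -/
def restrictComplex (Δ : Set (Finset V)) (W : Finset V) : Set (Finset V) :=
  {F | F ∈ Δ ∧ F ⊆ W}

/-- The oriented `1`-chain `[a,b]` (so `[a,b] = -[b,a]`). -/
noncomputable def edgeChain (a b : V) : Finset V →₀ K :=
  if a < b then Finsupp.single {a, b} 1 else -Finsupp.single {a, b} 1

/-- The oriented `2`-chain `[x,y,z]`, antisymmetric under transpositions. -/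
noncomputable def triChain (x y z : V) : Finset V →₀ K :=
  if (x < y ∧ y < z) ∨ (y < z ∧ z < x) ∨ (z < x ∧ x < y)
  then Finsupp.single {x, y, z} 1
  else -Finsupp.single {x, y, z} 1

/-! ## Graded Betti numbers of monomial ideals via the Taylor complex -/

variable {n : ℕ}

/-- The multidegree lcm of the monomial generators indexed by `S`. -/
def mlcm {r : ℕ} (g : Fin r → (Fin n → ℕ)) (S : Finset (Fin r)) : Fin n → ℕ :=
  fun x => S.sup fun k => g k x

/-- The differential of the Taylor complex tensored with the residue field `K`. -/
noncomputable def bdT {r : ℕ} (g : Fin r → (Fin n → ℕ)) :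
    (Finset (Fin r) →₀ K) →ₗ[K] (Finset (Fin r) →₀ K) :=
  Finsupp.lsum K fun S => LinearMap.toSpanSingleton K (Finset (Fin r) →₀ K)
    (∑ k ∈ S, if mlcm g (S.erase k) = mlcm g S
      then ((-1 : K) ^ ((S.filter (fun j => j < k)).card)) • Finsupp.single (S.erase k) (1 : K)
      else 0)

/-- The degree-`j` strand of the Taylor complex in homological degree `p`. -/
noncomputable def strand {r : ℕ} (g : Fin r → (Fin n → ℕ)) (p j : ℕ) :
    Submodule K (Finset (Fin r) →₀ K) :=
  Submodule.span K
    {c | ∃ S : Finset (Fin r), S.card = p ∧ (∑ x, mlcm g S x) = j ∧ c = Finsupp.single S 1}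

/-- `dim_K Tor_p(S/I, K)_j`, computed from the Taylor complex on the monomial
generators `g` of `I`. -/
noncomputable def torRank {r : ℕ} (g : Fin r → (Fin n → ℕ)) (p j : ℕ) : ℕ :=
  Module.finrank K ↥(strand K g p j ⊓ LinearMap.ker (bdT K g)) -
    Module.finrank K
      ↥(Submodule.map (bdT K g) (strand K g (p+1) j) ⊓
          (strand K g p j ⊓ LinearMap.ker (bdT K g)))

/-- The graded Betti number `β_{i,j}(I)` of the monomial ideal `I` generated by
the monomials with exponent vectors `g`, i.e. `dim_K Tor_i(I, K)_j = dim_K Tor_{i+1}(S/I, K)_j`. -/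
noncomputable def betti {r : ℕ} (g : Fin r → (Fin n → ℕ)) (i j : ℕ) : ℕ :=
  torRank K g (i+1) j

/-- The monomial with exponent vector `a`. -/
noncomputable def mono (a : Fin n → ℕ) : MvPolynomial (Fin n) K :=
  MvPolynomial.monomial (Finsupp.equivFunOnFinite.symm a) 1

/-- `g` is a list of exponent vectors of monomials generating the ideal `I`. -/
def IsGenSet {r : ℕ} (g : Fin r → (Fin n → ℕ)) (I : Ideal (MvPolynomial (Fin n) K)) : Prop :=
  Ideal.span (Set.range fun k => mono K (g k)) = I

/-- The ideal (generated by the monomials with exponent vectors `g`) has a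
`d`-linear resolution. -/
def HasLinRes {r : ℕ} (g : Fin r → (Fin n → ℕ)) (d : ℕ) : Prop :=
  ∀ i j, betti K g i j ≠ 0 → j = i + d

/-- Castelnuovo–Mumford regularity of a monomial ideal, from its Betti numbers. -/
noncomputable def regT {r : ℕ} (g : Fin r → (Fin n → ℕ)) : ℕ :=
  sSup {d | ∃ i j, betti K g i j ≠ 0 ∧ j = i + d}

/-! ## Edge ideals -/

/-- The edge ideal of a simple graph. -/
noncomputable def edgeIdeal (G : SimpleGraph (Fin n)) : Ideal (MvPolynomial (Fin n) K) :=
  Ideal.span {m | ∃ i j : Fin n, G.Adj i j ∧ m = MvPolynomial.X i * MvPolynomial.X j}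

/-- The edge set of `G` as a finset. -/
noncomputable def edgeFins (G : SimpleGraph (Fin n)) : Finset (Sym2 (Fin n)) :=
  letI : Fintype ↥G.edgeSet := Fintype.ofFinite _
  G.edgeFinset

/-- The canonical monomial (exponent vector) generators of the edge ideal of `G`. -/
noncomputable def edgeGens (G : SimpleGraph (Fin n)) : Fin (edgeFins G).card → (Fin n → ℕ) :=
  fun k x => if x ∈ ((edgeFins G).equivFin.symm k : Sym2 (Fin n)) then 1 else 0

/-- The graded Betti numbers `β_{i,j}(I(G))` of the edge ideal of `G` over `K`. -/
noncomputable def gBetti (G : SimpleGraph (Fin n)) (i j : ℕ) : ℕ :=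
  betti K (edgeGens G) i j

/-- The projective dimension `pd(I(G))` of the edge ideal of `G` over `K`. -/
noncomputable def gPd (G : SimpleGraph (Fin n)) : ℕ :=
  sSup {i | ∃ j, gBetti K G i j ≠ 0}

/-- The Green–Lazarsfeld index of the edge ideal of `G` over `K`
(`⊤` iff the ideal has a linear resolution). -/
noncomputable def gIndex (G : SimpleGraph (Fin n)) : ℕ∞ :=
  sInf {N : ℕ∞ | ∃ i j : ℕ, N = (i : ℕ∞) ∧ i + 2 < j ∧ gBetti K G i j ≠ 0}

/-- The regularity of the edge ideal of `G` over `K`. -/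
noncomputable def gReg (G : SimpleGraph (Fin n)) : ℕ :=
  sSup {d | ∃ i j, gBetti K G i j ≠ 0 ∧ j = i + d}

/-- The edge ideal of `G` has a (2-)linear resolution over `K`. -/
def gLinRes (G : SimpleGraph (Fin n)) : Prop :=
  ∀ i j, gBetti K G i j ≠ 0 → j = i + 2

/-- The edge ideal of `G` has almost maximal finite index over `K`:
`index(I(G)) = pd(I(G)) - 1` (with the index finite). -/
def AMFI (G : SimpleGraph (Fin n)) : Prop :=
  gIndex K G + 1 = (gPd K G : ℕ∞)

/-! ## Graph-theoretic notions -/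

/-- `H` contains an induced (chordless) cycle of length `l`. -/
def HasInducedCycle {W : Type} (H : SimpleGraph W) (l : ℕ) : Prop :=
  ∃ f : ZMod l → W, Function.Injective f ∧
    ∀ i j : ZMod l, H.Adj (f i) (f j) ↔ (j = i + 1 ∨ i = j + 1)

/-- `H` is chordal: it has no induced cycle of length greater than `3`. -/
def Chordal {W : Type} (H : SimpleGraph W) : Prop :=
  ∀ l : ℕ, 3 < l → ¬ HasInducedCycle H l

end EP

/-!
By Hochster's formula, `β_{i,j}(I(G)) ≠ 0` exactly when, for some set `W` of `j` vertices, the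
clique complex of `Gᶜ` restricted to `W` has nonzero reduced (co)homology in degree `j - i - 2`.
It is read off the Taylor complex: the strand in the squarefree multidegree `W` is carried by the
sets of edges covering `W`, and Dowker duality turns these into the complements in `W` of the
faces of the clique complex.

Let `t` be the index and `C` an induced cycle of `Gᶜ` of length `l`. It is a circle, so
`β_{l-3,l} ≠ 0` and `t ≤ l - 3 ≤ pd = t + 1`. Suppose `l = t + 4`. A vertex `v ∉ C` that is
`G`-adjacent to a vertex of `C` would keep the class of the circle alive on `C ∪ {v}`, so that
`β_{l-2,l+1} ≠ 0`; two `G`-adjacent vertices outside `C`, being then joined in `Gᶜ` to all of `C`,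
would span a 2-sphere together with `C`, so that `β_{l-2,l+2} ≠ 0`. Both exceed `pd`, so all
vertices outside `C` are cone points of the clique complex, and a nonzero `β_{t,j}` with
`j > t + 2 = l - 2` comes from some `W ⊆ C` with at least `l - 1` vertices: a path, which is
contractible, or the circle itself, which contributes only at `i = l - 3 = t + 1`. This contradicts
the definition of the index.
-/

namespace EP

open Finset

section Chains

variable {ι : Type*} [LinearOrder ι] {R : Type*} [CommRing R]

variable (R) in
/-- The sign `(-1) ^ #{w ∈ X | w < a}` with which `insert a X` has `X.erase a` in its boundary.
It does not depend on whether `a ∈ X`. -/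
def insertSign (X : Finset ι) (a : ι) : R :=
  (-1) ^ #{w ∈ X | w < a}

lemma insertSign_mul_self (X : Finset ι) (a : ι) : insertSign R X a * insertSign R X a = 1 := by
  rw [insertSign, ← mul_pow, neg_one_mul, neg_neg, one_pow]

lemma isUnit_insertSign (X : Finset ι) (a : ι) : IsUnit (insertSign R X a) :=
  .of_mul_eq_one _ (insertSign_mul_self X a)

lemma insertSign_insert_of_le {X : Finset ι} {a b : ι} (h : a ≤ b) :
    insertSign R (insert b X) a = insertSign R X a := by
  rw [insertSign, filter_insert, if_neg h.not_gt, insertSign]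

lemma insertSign_insert_of_lt {X : Finset ι} {a b : ι} (h : a < b) (ha : a ∉ X) :
    insertSign R (insert a X) b = -insertSign R X b := by
  rw [insertSign, filter_insert, if_pos h, card_insert_of_notMem (by simp [ha]), pow_succ',
    neg_one_mul, insertSign]

lemma insertSign_insert_self (X : Finset ι) (a : ι) :
    insertSign R (insert a X) a = insertSign R X a :=
  insertSign_insert_of_le le_rfl

lemma insertSign_insert_mul_insertSign_insert {X : Finset ι} {a b : ι} (hab : a ≠ b) (ha : a ∉ X)
    (hb : b ∉ X) :
    insertSign R (insert b X) a * insertSign R (insert a X) b =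
      -(insertSign R X a * insertSign R X b) := by
  rcases hab.lt_or_gt with h | h
  · rw [insertSign_insert_of_le h.le, insertSign_insert_of_lt h ha, mul_neg]
  · rw [insertSign_insert_of_le h.le, insertSign_insert_of_lt h hb, neg_mul]

lemma insertSign_mul_insertSign_insert_swap {X : Finset ι} {a b : ι} (hab : a ≠ b) (ha : a ∉ X)
    (hb : b ∉ X) :
    insertSign R X a * insertSign R (insert a X) b =
      -(insertSign R X b * insertSign R (insert b X) a) := by
  rcases hab.lt_or_gt with h | h
  · rw [insertSign_insert_of_le h.le, insertSign_insert_of_lt h ha]; ring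
  · rw [insertSign_insert_of_le h.le, insertSign_insert_of_lt h hb]; ring

lemma insertSign_mul_insertSign_sdiff {X W : Finset ι} (h : X ⊆ W) (a : ι) :
    insertSign R X a * insertSign R (W \ X) a = insertSign R W a := by
  rw [insertSign, insertSign, insertSign, ← pow_add, ← card_union_of_disjoint
    (disjoint_filter_filter disjoint_sdiff), ← filter_union, union_sdiff_of_subset h]

/-- The cone over a chain with apex `v`, i.e. exterior multiplication by the vertex `v`. Faces that
already contain `v` are annihilated. -/
def cone (v : ι) (z : Finset ι → R) (X : Finset ι) : R :=
  if v ∈ X then insertSign R X v * z (X.erase v) else 0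

lemma cone_of_mem {v : ι} {X : Finset ι} (h : v ∈ X) (z : Finset ι → R) :
    cone v z X = insertSign R X v * z (X.erase v) :=
  if_pos h

lemma cone_of_notMem {v : ι} {X : Finset ι} (h : v ∉ X) (z : Finset ι → R) : cone v z X = 0 :=
  if_neg h

lemma cone_ne_zero_iff {v : ι} {z : Finset ι → R} {X : Finset ι} :
    cone v z X ≠ 0 ↔ v ∈ X ∧ z (X.erase v) ≠ 0 := by
  by_cases hv : v ∈ X
  · rw [cone_of_mem hv, Ne, (isUnit_insertSign (R := R) X v).mul_right_eq_zero, and_iff_right hv]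
  · simp [cone_of_notMem hv, hv]

lemma cone_zero (v : ι) : cone v (0 : Finset ι → R) = 0 := by
  ext X
  simp only [cone, Pi.zero_apply, mul_zero, ite_self]

variable [Fintype ι]

/-- The simplicial boundary of a chain, given by its coefficients on finsets of vertices; the empty
set is the `(-1)`-dimensional simplex. -/
def boundary : (Finset ι → R) →ₗ[R] (Finset ι → R) where
  toFun z X := ∑ a ∈ Xᶜ, insertSign R X a * z (insert a X)
  map_add' z y := by ext X; simp only [Pi.add_apply, mul_add, sum_add_distrib]
  map_smul' c z := by
    ext X
    simp only [Pi.smul_apply, smul_eq_mul, mul_left_comm _ c, ← Finset.mul_sum, RingHom.id_apply]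

lemma boundary_apply (z : Finset ι → R) (X : Finset ι) :
    boundary z X = ∑ a ∈ Xᶜ, insertSign R X a * z (insert a X) :=
  rfl

lemma exists_insert_ne_zero_of_boundary_ne_zero {z : Finset ι → R} {X : Finset ι}
    (h : boundary z X ≠ 0) : ∃ a ∉ X, z (insert a X) ≠ 0 := by
  obtain ⟨a, ha, hne⟩ := exists_ne_zero_of_sum_ne_zero h
  exact ⟨a, mem_compl.1 ha, right_ne_zero_of_mul hne⟩

lemma boundary_congr {z y : Finset ι → R} {X : Finset ι}
    (h : ∀ a ∉ X, z (insert a X) = y (insert a X)) : boundary z X = boundary y X :=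
  sum_congr rfl fun a ha => by rw [h a (mem_compl.1 ha)]

lemma boundary_boundary (z : Finset ι → R) : boundary (boundary z) = 0 := by
  ext X
  simp only [boundary_apply, Finset.mul_sum, Pi.zero_apply]
  rw [sum_sigma']
  refine sum_involution (fun p _ => ⟨p.2, p.1⟩) ?_ ?_ ?_ fun _ _ => rfl
  all_goals
    rintro ⟨a, b⟩ h
    simp only [mem_sigma, mem_compl, mem_insert, not_or] at h
    obtain ⟨ha, hba, hb⟩ := h
  · have hswap := insertSign_mul_insertSign_insert_swap (R := R) (Ne.symm hba) ha hb
    rw [Finset.insert_comm b a X]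
    linear_combination z (insert a (insert b X)) * hswap
  · intro _ heq
    exact hba (congrArg Sigma.fst heq)
  · simp only [mem_sigma, mem_compl, mem_insert, not_or]
    exact ⟨hb, Ne.symm hba, ha⟩

lemma boundary_cone (v : ι) (z : Finset ι → R) :
    boundary (cone v z) = z - cone v (boundary z) := by
  ext X
  rw [Pi.sub_apply]
  by_cases hv : v ∈ X
  · obtain ⟨Y, hvY, rfl⟩ : ∃ Y, v ∉ Y ∧ insert v Y = X := ⟨X.erase v, by simp, insert_erase hv⟩
    have hterm : ∀ a ∈ (insert v Y)ᶜ,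
        insertSign R (insert v Y) a * cone v z (insert a (insert v Y)) =
          -(insertSign R Y v * (insertSign R Y a * z (insert a Y))) := by
      intro a ha
      obtain ⟨hav, haY⟩ : a ≠ v ∧ a ∉ Y := by simpa using ha
      have hsign := insertSign_insert_mul_insertSign_insert (R := R) hav haY hvY
      rw [cone_of_mem (by simp), Finset.insert_comm, insertSign_insert_self,
        erase_insert (by simp [hav.symm, hvY])]
      linear_combination z (insert a Y) * hsign
    have hcompl : Yᶜ = insert v (insert v Y)ᶜ := by
      rw [compl_insert, insert_erase (mem_compl.2 hvY)]
    rw [cone_of_mem hv, erase_insert hvY, insertSign_insert_self, boundary_apply, boundary_apply,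
      sum_congr rfl hterm, sum_neg_distrib, ← Finset.mul_sum, hcompl, sum_insert (by simp)]
    linear_combination z (insert v Y) * insertSign_mul_self (R := R) Y v
  · rw [cone_of_notMem hv, sub_zero, boundary_apply, sum_eq_single_of_mem v (mem_compl.2 hv)]
    · rw [cone_of_mem (mem_insert_self v X), erase_insert hv, insertSign_insert_self, ← mul_assoc,
        insertSign_mul_self, one_mul]
    · intro a _ hav
      rw [cone_of_notMem (by simp [hv, hav.symm]), mul_zero]

lemma boundary_cone_of_boundary_eq_zero {z : Finset ι → R} (hz : boundary z = 0) (v : ι) :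
    boundary (cone v z) = z := by
  rw [boundary_cone, hz, cone_zero, sub_zero]

lemma boundary_single_empty : boundary (Pi.single ∅ (1 : R) : Finset ι → R) = 0 := by
  ext X
  refine sum_eq_zero fun a _ => ?_
  rw [Pi.single_eq_of_ne (insert_ne_empty a X), mul_zero]

end Chains

section Exactness

variable {ι : Type*} {R : Type*} [CommRing R]

variable (R) in
/-- The chains supported on those members of a family `C` of finsets which have `p` vertices. -/
def chains (C : Set (Finset ι)) (p : ℕ) : Submodule R (Finset ι → R) where
  carrier := {z | ∀ X, z X ≠ 0 → X ∈ C ∧ #X = p}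
  add_mem' {z y} hz hy X hX := by
    by_cases hzX : z X = 0
    · exact hy X fun hyX => hX (by rw [Pi.add_apply, hzX, hyX, add_zero])
    · exact hz X hzX
  zero_mem' _ hX := absurd rfl hX
  smul_mem' _ _ hz X hX := hz X (right_ne_zero_of_mul hX)

lemma chains_mono {C D : Set (Finset ι)} (h : D ⊆ C) (p : ℕ) : chains R D p ≤ chains R C p :=
  fun _ hz X hX => ⟨h (hz X hX).1, (hz X hX).2⟩

lemma eq_zero_of_mem_chains {C : Set (Finset ι)} {p : ℕ} {z : Finset ι → R}
    (hz : z ∈ chains R C p) {X : Finset ι} (hX : X ∉ C) : z X = 0 :=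
  of_not_not fun h => hX (hz X h).1

lemma indicator_mem_chains {C D : Set (Finset ι)} {p : ℕ} {z : Finset ι → R}
    (hz : z ∈ chains R C p) : D.indicator z ∈ chains R D p := fun X hX =>
  have hXD : X ∈ D := Set.mem_of_indicator_ne_zero hX
  ⟨hXD, (hz X (by rwa [Set.indicator_of_mem hXD] at hX)).2⟩

lemma indicator_eq_self_of_mem_chains {C : Set (Finset ι)} {p : ℕ} {z : Finset ι → R}
    (hz : z ∈ chains R C p) : C.indicator z = z :=
  Set.indicator_eq_self.2 fun X hX => (hz X hX).1

lemma indicator_eq_indicator_of_eqOn_zero_sdiff {C D : Set ι} (hDC : D ⊆ C) {z : ι → R}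
    (h : ∀ X ∈ C \ D, z X = 0) : D.indicator z = C.indicator z := by
  ext X
  by_cases hD : X ∈ D
  · rw [Set.indicator_of_mem hD, Set.indicator_of_mem (hDC hD)]
  · rw [Set.indicator_of_notMem hD, Set.indicator_apply_eq_zero.2 fun hC => h X ⟨hC, hD⟩]

variable [LinearOrder ι]

lemma cone_mem_chains {C D : Set (Finset ι)} {p : ℕ} {z : Finset ι → R} (hz : z ∈ chains R C p)
    {v : ι} (h : ∀ X ∈ C, insert v X ∈ D) : cone v z ∈ chains R D (p + 1) := by
  intro X hX
  obtain ⟨hv, hne⟩ := cone_ne_zero_iff.1 hX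
  obtain ⟨hC, hcard⟩ := hz _ hne
  exact ⟨insert_erase hv ▸ h _ hC, by rw [← card_erase_add_one hv, hcard]⟩

variable [Fintype ι]

lemma boundary_mem_chains {C : Set (Finset ι)} {p : ℕ} {z : Finset ι → R}
    (hz : z ∈ chains R C (p + 1)) : boundary z ∈ chains R Set.univ p := by
  intro X hX
  obtain ⟨a, ha, hne⟩ := exists_insert_ne_zero_of_boundary_ne_zero hX
  have hcard := (hz _ hne).2
  rw [card_insert_of_notMem ha] at hcard
  exact ⟨Set.mem_univ X, Nat.succ_injective hcard⟩

lemma boundary_indicator {C : Set (Finset ι)} {z : Finset ι → R} {X : Finset ι}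
    (h : ∀ a ∉ X, z (insert a X) ≠ 0 → insert a X ∈ C) :
    boundary (C.indicator z) X = boundary z X :=
  boundary_congr fun a ha => by
    by_cases hz : z (insert a X) = 0
    · rw [hz, Set.indicator_apply_eq_zero.2 fun _ => hz]
    · exact Set.indicator_of_mem (h a ha hz) z

lemma boundary_indicator_boundary {C : Set (Finset ι)} (hC : C.OrdConnected) {p : ℕ}
    {z : Finset ι → R} (hz : z ∈ chains R C p) {X : Finset ι} (hX : X ∈ C) :
    boundary (C.indicator (boundary z)) X = 0 := by
  rw [boundary_indicator, boundary_boundary, Pi.zero_apply]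
  intro a _ hne
  obtain ⟨b, _, hbne⟩ := exists_insert_ne_zero_of_boundary_ne_zero hne
  exact hC.out hX (hz _ hbne).1 ⟨subset_insert a X, subset_insert b _⟩

variable (R) in
/-- Exactness, at the chains on faces with `p` vertices, of the relative chain complex carried by a
family `C` of finsets: the boundary is computed in the full simplex, and only its coefficients on
members of `C` are retained. This is a complex when `C` is order-connected. -/
def ExactAt (C : Set (Finset ι)) (p : ℕ) : Prop :=
  ∀ z ∈ chains R C p, (∀ X ∈ C, boundary z X = 0) →
    ∃ y ∈ chains R C (p + 1), ∀ X ∈ C, boundary y X = z X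

lemma exactAt_of_forall_card_ne {C : Set (Finset ι)} {p : ℕ} (h : ∀ X ∈ C, #X ≠ p) :
    ExactAt R C p := fun z hz _ => by
  have hz0 : z = 0 := funext fun X => of_not_not fun hX => h X (hz X hX).1 (hz X hX).2
  exact ⟨0, zero_mem _, fun X _ => by rw [map_zero, hz0]⟩

lemma exactAt_of_cone {C : Set (Finset ι)} {v : ι} (hv : ∀ X, insert v X ∈ C ↔ X ∈ C) (p : ℕ) :
    ExactAt R C p := by
  intro z hz hbd
  refine ⟨cone v z, cone_mem_chains hz fun X hX => (hv X).2 hX, fun X hX => ?_⟩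
  suffices cone v (boundary z) X = 0 by rw [boundary_cone, Pi.sub_apply, this, sub_zero]
  by_cases hvX : v ∈ X
  · rw [cone_of_mem hvX, hbd _ ((hv _).1 (by rwa [insert_erase hvX])), mul_zero]
  · exact cone_of_notMem hvX _

section Sdiff

variable {C D : Set (Finset ι)} {p : ℕ}

lemma boundary_eq_zero_of_mem_sdiff (hlow : ∀ ⦃X Y⦄, X ⊆ Y → Y ∈ D → X ∈ C → X ∈ D)
    {z : Finset ι → R} (hz : z ∈ chains R D p) {X : Finset ι} (hX : X ∈ C \ D) :
    boundary z X = 0 := by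
  by_contra hne
  obtain ⟨a, _, hza⟩ := exists_insert_ne_zero_of_boundary_ne_zero hne
  exact hX.2 (hlow (subset_insert a X) (hz _ hza).1 hX.1)

lemma boundary_indicator_sdiff (hlow : ∀ ⦃X Y⦄, X ⊆ Y → Y ∈ D → X ∈ C → X ∈ D)
    {z : Finset ι → R} (hz : z ∈ chains R C p) {X : Finset ι} (hX : X ∈ C \ D) :
    boundary ((C \ D).indicator z) X = boundary z X :=
  boundary_indicator fun a _ hne =>
    ⟨(hz _ hne).1, fun ha => hX.2 (hlow (subset_insert a X) ha hX.1)⟩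

lemma ExactAt.of_sdiff (hC : C.OrdConnected) (hDC : D ⊆ C)
    (hlow : ∀ ⦃X Y⦄, X ⊆ Y → Y ∈ D → X ∈ C → X ∈ D) (hD : ExactAt R D p)
    (h : ExactAt R (C \ D) p) : ExactAt R C p := by
  intro z hz hbd
  obtain ⟨y, hy, hyz⟩ := h _ (indicator_mem_chains hz) fun X hX => by
    rw [boundary_indicator_sdiff hlow hz hX, hbd X hX.1]
  have hyC := chains_mono Set.sdiff_subset _ hy
  have hrest : D.indicator (z - boundary y) = z - C.indicator (boundary y) := by
    rw [indicator_eq_indicator_of_eqOn_zero_sdiff hDC, Set.indicator_sub',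
      indicator_eq_self_of_mem_chains hz]
    intro X hX
    rw [Pi.sub_apply, hyz X hX, Set.indicator_of_mem hX, sub_self]
  obtain ⟨w, hw, hwz⟩ := hD (D.indicator (z - boundary y))
    (indicator_mem_chains (sub_mem (chains_mono (Set.subset_univ C) _ hz)
      (boundary_mem_chains hy))) fun X hX => by
    rw [hrest, map_sub, Pi.sub_apply, hbd X (hDC hX),
      boundary_indicator_boundary hC hyC (hDC hX), sub_zero]
  refine ⟨y + w, add_mem hyC (chains_mono hDC _ hw), fun X hX => ?_⟩
  rw [map_add, Pi.add_apply]
  by_cases hXD : X ∈ D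
  · rw [hwz X hXD, Set.indicator_of_mem hXD, Pi.sub_apply, add_sub_cancel]
  · have hXCD : X ∈ C \ D := ⟨hX, hXD⟩
    rw [hyz X hXCD, boundary_eq_zero_of_mem_sdiff hlow hw hXCD, Set.indicator_of_mem hXCD, add_zero]

lemma exists_mem_chains_boundary_eq (hC : C.OrdConnected) (hDC : D ⊆ C)
    (hD : ∀ q, ExactAt R D q) {z : Finset ι → R} (hz : z ∈ chains R C p)
    (hbd : ∀ X ∈ C \ D, boundary z X = 0) :
    ∃ y ∈ chains R D p, ∀ X ∈ D, boundary y X = boundary z X := by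
  cases p with
  | zero =>
    refine ⟨0, zero_mem _, fun X _ => ?_⟩
    by_contra hne
    obtain ⟨a, _, hza⟩ := exists_insert_ne_zero_of_boundary_ne_zero (z := z) (X := X) fun h0 =>
      hne (by rw [h0, map_zero, Pi.zero_apply])
    exact insert_ne_empty a X (card_eq_zero.1 (hz _ hza).2)
  | succ q =>
    obtain ⟨y, hy, hyz⟩ := hD q (D.indicator (boundary z))
      (indicator_mem_chains (boundary_mem_chains hz)) fun X hX => by
      rw [indicator_eq_indicator_of_eqOn_zero_sdiff hDC hbd,
        boundary_indicator_boundary hC hz (hDC hX)]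
    exact ⟨y, hy, fun X hX => by rw [hyz X hX, Set.indicator_of_mem hX]⟩

lemma ExactAt.sdiff (hC : C.OrdConnected) (hDC : D ⊆ C)
    (hlow : ∀ ⦃X Y⦄, X ⊆ Y → Y ∈ D → X ∈ C → X ∈ D) (hD : ∀ q, ExactAt R D q)
    (h : ExactAt R C p) : ExactAt R (C \ D) p := by
  intro z hz hbd
  have hzC := chains_mono Set.sdiff_subset _ hz
  obtain ⟨w, hw, hwz⟩ := exists_mem_chains_boundary_eq hC hDC hD hzC hbd
  obtain ⟨y, hy, hyz⟩ := h (z - w) (sub_mem hzC (chains_mono hDC _ hw)) fun X hX => by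
    rw [map_sub, Pi.sub_apply]
    by_cases hXD : X ∈ D
    · rw [hwz X hXD, sub_self]
    · rw [hbd X ⟨hX, hXD⟩, boundary_eq_zero_of_mem_sdiff hlow hw ⟨hX, hXD⟩, sub_zero]
  refine ⟨(C \ D).indicator y, indicator_mem_chains hy, fun X hX => ?_⟩
  rw [boundary_indicator_sdiff hlow hy hX, hyz X hX.1, Pi.sub_apply,
    eq_zero_of_mem_chains hw hX.2, sub_zero]

lemma exactAt_sdiff_iff (hC : C.OrdConnected) (hDC : D ⊆ C)
    (hlow : ∀ ⦃X Y⦄, X ⊆ Y → Y ∈ D → X ∈ C → X ∈ D) (hD : ∀ q, ExactAt R D q) :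
    ExactAt R (C \ D) p ↔ ExactAt R C p :=
  ⟨ExactAt.of_sdiff hC hDC hlow (hD p), ExactAt.sdiff hC hDC hlow hD⟩

end Sdiff

/-- The algebraic shadow of the patchwork theorem of discrete Morse theory: a minimal fibre of `φ`
can be split off as a subcomplex. -/
lemma exactAt_of_fibers {α : Type*} [PartialOrder α] {φ : Finset ι → α} (hφ : Monotone φ)
    {C : Set (Finset ι)} (hC : C.OrdConnected) (h : ∀ s p, ExactAt R {X ∈ C | φ X = s} p) (p : ℕ) :
    ExactAt R C p := by
  induction C using WellFoundedLT.induction with | _ C ih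
  obtain rfl | hne := C.eq_empty_or_nonempty
  · exact exactAt_of_forall_card_ne (by simp)
  obtain ⟨X₀, hX₀, hmin⟩ := C.toFinite.exists_minimalFor φ C hne
  set D := {X ∈ C | φ X = φ X₀}
  have hDC : D ⊆ C := Set.sep_subset C _
  have hlow : ∀ ⦃X Y⦄, X ⊆ Y → Y ∈ D → X ∈ C → X ∈ D := fun X Y hXY hY hX =>
    have hle : φ X ≤ φ X₀ := hY.2 ▸ hφ hXY
    ⟨hX, hle.antisymm (hmin hX hle)⟩
  refine ExactAt.of_sdiff hC hDC hlow (h _ p) (ih _ ?_ ⟨?_⟩ fun s q => ?_)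
  · exact Set.sdiff_subset.ssubset_of_mem_notMem hX₀ fun hX => hX.2 ⟨hX₀, rfl⟩
  · exact fun X hX Z hZ Y hY =>
      ⟨hC.out hX.1 hZ.1 hY, fun hYD => hX.2 (hlow hY.1 hYD hX.1)⟩
  · by_cases hs : s = φ X₀
    · exact exactAt_of_forall_card_ne fun X hX => absurd ⟨hX.1.1, hX.2.trans hs⟩ hX.1.2
    · convert h s q using 1
      ext X
      exact ⟨fun hX => ⟨hX.1.1, hX.2⟩, fun hX => ⟨⟨hX.1, fun hD => hs (hX.2 ▸ hD.2)⟩, hX.2⟩⟩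

end Exactness

section Transfer

variable {κ ι : Type*} [LinearOrder κ] [LinearOrder ι] {R : Type*} [CommRing R]

lemma insertSign_map (e : κ ↪o ι) (X : Finset κ) (a : κ) :
    insertSign R (X.map e.toEmbedding) (e a) = insertSign R X a := by
  rw [insertSign, filter_map, card_map, insertSign]
  simp only [Function.comp_def, RelEmbedding.coe_toEmbedding, e.lt_iff_lt]

variable [Fintype κ] [Fintype ι]

lemma boundary_map (e : κ ↪o ι) {z : Finset ι → R} (X : Finset κ)
    (hz : ∀ b ∉ Set.range e, z (insert b (X.map e.toEmbedding)) = 0) :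
    boundary z (X.map e.toEmbedding) = boundary (fun Y => z (Y.map e.toEmbedding)) X := by
  have hmap : Xᶜ.map e.toEmbedding ⊆ (X.map e.toEmbedding)ᶜ := by
    intro b hb
    obtain ⟨a, ha, rfl⟩ := mem_map.1 hb
    simpa using ha
  rw [boundary_apply, boundary_apply, ← sum_subset hmap, sum_map]
  · refine sum_congr rfl fun a _ => ?_
    rw [map_insert, RelEmbedding.coe_toEmbedding, insertSign_map]
  · intro b hb hb'
    rw [hz b, mul_zero]
    rintro ⟨a, rfl⟩
    simp_all

lemma exactAt_image_map (e : κ ↪o ι) {C : Set (Finset κ)} {p : ℕ} :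
    ExactAt R ((fun X => X.map e.toEmbedding) '' C) p ↔ ExactAt R C p := by
  have hinj : Function.Injective (Finset.map e.toEmbedding) := map_injective _
  have hbd {q : ℕ} {z : Finset ι → R}
      (hz : z ∈ chains R ((fun X => X.map e.toEmbedding) '' C) q) (X : Finset κ) :
      boundary z (X.map e.toEmbedding) = boundary (fun Y => z (Y.map e.toEmbedding)) X := by
    refine boundary_map e X fun b hb => of_not_not fun hne => ?_
    obtain ⟨⟨Y, _, hY⟩, _⟩ := hz _ hne
    obtain ⟨a, _, rfl⟩ := mem_map.1 (hY ▸ mem_insert_self b _)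
    exact hb ⟨a, rfl⟩
  have hpull {q : ℕ} {z : Finset ι → R}
      (hz : z ∈ chains R ((fun X => X.map e.toEmbedding) '' C) q) :
      (fun Y => z (Y.map e.toEmbedding)) ∈ chains R C q := fun Y hY =>
    ⟨hinj.mem_set_image.1 (hz _ hY).1, card_map e.toEmbedding ▸ (hz _ hY).2⟩
  have hpush {q : ℕ} {z : Finset κ → R} (hz : z ∈ chains R C q) :
      Function.extend (Finset.map e.toEmbedding) z 0 ∈
        chains R ((fun X => X.map e.toEmbedding) '' C) q := by
    intro Y hY
    by_cases hYe : ∃ X, Finset.map e.toEmbedding X = Y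
    · obtain ⟨X, rfl⟩ := hYe
      rw [hinj.extend_apply] at hY
      exact ⟨Set.mem_image_of_mem _ (hz X hY).1, (card_map _).trans (hz X hY).2⟩
    · exact absurd (Function.extend_apply' _ _ _ hYe) hY
  constructor
  · intro h z hz hz0
    obtain ⟨y, hy, hyz⟩ := h _ (hpush hz) <| Set.forall_mem_image.2 fun X hX => by
      simpa only [hbd (hpush hz), hinj.extend_apply] using hz0 X hX
    refine ⟨_, hpull hy, fun X hX => ?_⟩
    rw [← hbd hy, hyz _ (Set.mem_image_of_mem _ hX), hinj.extend_apply]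
  · intro h z hz hz0
    obtain ⟨y, hy, hyz⟩ := h _ (hpull hz) fun X hX => by
      rw [← hbd hz, hz0 _ (Set.mem_image_of_mem _ hX)]
    refine ⟨_, hpush hy, Set.forall_mem_image.2 fun X hX => ?_⟩
    simpa only [hbd (hpush hy), hinj.extend_apply] using hyz X hX

end Transfer

section Dowker

/-- The non-faces on `A` of the Dowker complex of a relation between `A` and `B`: the finite subsets
of `A` which are related to no common element of `B`. -/
def dowkerNonfaces {α β : Type*} (A : Set α) (B : Set β) (r : α → β → Prop) : Set (Finset α) :=
  {X | (X : Set α) ⊆ A ∧ ¬∃ b ∈ B, ∀ a ∈ X, r a b}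

/-- The finite subsets of `A ∪ B` in which every element of `A` is related to every element of
`B`. -/
def bicliques {ι : Type*} (A B : Set ι) (r : ι → ι → Prop) : Set (Finset ι) :=
  {X | (X : Set ι) ⊆ A ∪ B ∧ ∀ a ∈ X, ∀ b ∈ X, a ∈ A → b ∈ B → r a b}

lemma isLowerSet_bicliques {ι : Type*} (A B : Set ι) (r : ι → ι → Prop) :
    IsLowerSet (bicliques A B r) := fun _ _ hYX hX =>
  ⟨fun _ ha => hX.1 (hYX ha), fun a ha b hb => hX.2 a (hYX ha) b (hYX hb)⟩

lemma bicliques_flip {ι : Type*} (A B : Set ι) (r : ι → ι → Prop) :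
    bicliques B A (flip r) = bicliques A B r := by
  ext X
  rw [bicliques, bicliques, Set.mem_ofPred, Set.mem_ofPred, Set.union_comm]
  exact and_congr_right fun _ =>
    ⟨fun h a ha b hb hA hB => h b hb a ha hB hA, fun h b hb a ha hB hA => h a ha b hb hA hB⟩

variable {ι : Type*} {A B : Set ι}

lemma bicliques_sdiff (hAB : Disjoint A B) (r : ι → ι → Prop) :
    bicliques A B r \ {X ∈ bicliques A B r | ∃ b ∈ B, ∀ a ∈ X, a ∈ A → r a b} =
      dowkerNonfaces A B r := by
  ext X
  constructor
  · rintro ⟨hX, hdom⟩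
    have hXA : (X : Set ι) ⊆ A := fun b hb => (hX.1 hb).resolve_right fun hB =>
      hdom ⟨hX, b, hB, fun a ha hA => hX.2 a ha b hb hA hB⟩
    exact ⟨hXA, fun ⟨b, hB, hb⟩ => hdom ⟨hX, b, hB, fun a ha _ => hb a ha⟩⟩
  · rintro ⟨hXA, hX⟩
    exact ⟨⟨hXA.trans Set.subset_union_left, fun _ _ b hb _ hB =>
      (hAB.notMem_of_mem_left (hXA hb) hB).elim⟩,
      fun ⟨_, b, hB, hb⟩ => hX ⟨b, hB, fun a ha => hb a ha (hXA ha)⟩⟩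

variable [LinearOrder ι] [Fintype ι] {R : Type*} [CommRing R]

open Classical in
/-- Grouping the sets by their trace on `A`, every nonempty fibre is a cone with apex in `B`. -/
lemma exactAt_dominated_bicliques (hAB : Disjoint A B) (r : ι → ι → Prop) (p : ℕ) :
    ExactAt R {X ∈ bicliques A B r | ∃ b ∈ B, ∀ a ∈ X, a ∈ A → r a b} p := by
  have hlow : IsLowerSet {X ∈ bicliques A B r | ∃ b ∈ B, ∀ a ∈ X, a ∈ A → r a b} :=
    fun X Y hYX ⟨hX, b, hB, hb⟩ =>
      ⟨isLowerSet_bicliques A B r hYX hX, b, hB, fun a ha => hb a (hYX ha)⟩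
  refine exactAt_of_fibers (φ := fun X => X.filter (· ∈ A)) (fun _ _ h => filter_subset_filter _ h)
    hlow.ordConnected (fun s q => ?_) p
  by_cases hs : ∃ b ∈ B, ∀ a ∈ s, r a b
  · obtain ⟨b, hB, hb⟩ := hs
    have hbA : b ∉ A := hAB.notMem_of_mem_right hB
    have hfilter (X : Finset ι) : (insert b X).filter (· ∈ A) = X.filter (· ∈ A) := by
      rw [filter_insert, if_neg hbA]
    refine exactAt_of_cone (v := b) (fun X => ?_) q
    refine ⟨fun ⟨hX, hXs⟩ => ⟨hlow (subset_insert b X) hX, hfilter X ▸ hXs⟩, fun ⟨hX, hXs⟩ => ?_⟩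
    have hbX : ∀ a ∈ insert b X, a ∈ A → a ∈ X ∧ r a b := fun a ha hA =>
      have haX := mem_of_mem_insert_of_ne ha fun hab => hbA (hab ▸ hA)
      ⟨haX, hb a (hXs ▸ mem_filter.2 ⟨haX, hA⟩)⟩
    refine ⟨⟨⟨?_, fun a ha b' hb' hA hB' => ?_⟩, b, hB, fun a ha hA => (hbX a ha hA).2⟩,
      (hfilter X).trans hXs⟩
    · rw [coe_insert]
      exact Set.insert_subset (Or.inr hB) hX.1.1
    · obtain rfl | hb' := mem_insert.1 hb'
      · exact (hbX a ha hA).2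
      · exact hX.1.2 a (hbX a ha hA).1 b' hb' hA hB'
  · refine exactAt_of_forall_card_ne fun X hX => absurd ?_ hs
    obtain ⟨⟨_, b, hB, hb⟩, rfl⟩ := hX
    exact ⟨b, hB, fun a ha => hb a (mem_filter.1 ha).1 (mem_filter.1 ha).2⟩

lemma exactAt_dowkerNonfaces_iff_bicliques (hAB : Disjoint A B) (r : ι → ι → Prop) {p : ℕ} :
    ExactAt R (dowkerNonfaces A B r) p ↔ ExactAt R (bicliques A B r) p := by
  rw [← bicliques_sdiff hAB r]
  exact exactAt_sdiff_iff (isLowerSet_bicliques A B r).ordConnected (Set.sep_subset _ _)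
    (fun X Y hXY ⟨_, b, hB, hb⟩ hX => ⟨hX, b, hB, fun a ha => hb a (hXY ha)⟩)
    (exactAt_dominated_bicliques hAB r)

lemma exactAt_dowkerNonfaces_flip (hAB : Disjoint A B) (r : ι → ι → Prop) {p : ℕ} :
    ExactAt R (dowkerNonfaces A B r) p ↔ ExactAt R (dowkerNonfaces B A (flip r)) p := by
  rw [exactAt_dowkerNonfaces_iff_bicliques hAB, exactAt_dowkerNonfaces_iff_bicliques hAB.symm,
    bicliques_flip]

lemma image_map_dowkerNonfaces {α β α' β' : Type*} (e : α ↪ α') (f : β ↪ β') (A : Set α)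
    (B : Set β) (r : α → β → Prop) :
    (fun X => X.map e) '' dowkerNonfaces A B r =
      dowkerNonfaces (e '' A) (f '' B) (Relation.Map r e f) := by
  ext Y
  constructor
  · rintro ⟨X, ⟨hXA, hX⟩, rfl⟩
    refine ⟨by simpa using Set.image_mono hXA, ?_⟩
    rintro ⟨_, ⟨b, hB, rfl⟩, hb⟩
    refine hX ⟨b, hB, fun a ha => ?_⟩
    obtain ⟨a', b', hr, haa', hbb'⟩ := hb _ (mem_map_of_mem e ha)
    rwa [← e.injective haa', ← f.injective hbb']
  · rintro ⟨hYA, hY⟩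
    classical
    obtain ⟨X, hXA, rfl⟩ := subset_set_image_iff.1 hYA
    refine ⟨X, ⟨hXA, fun ⟨b, hB, hb⟩ => hY ⟨f b, Set.mem_image_of_mem f hB, ?_⟩⟩, map_eq_image e X⟩
    exact forall_mem_image.2 fun a ha => ⟨a, b, hb a ha, rfl, rfl⟩

/-- **Dowker duality**. -/
theorem exactAt_dowkerNonfaces_comm {α β : Type*} [LinearOrder α] [Fintype α] [LinearOrder β]
    [Fintype β] (A : Set α) (B : Set β) (r : α → β → Prop) {p : ℕ} :
    ExactAt R (dowkerNonfaces A B r) p ↔ ExactAt R (dowkerNonfaces B A (flip r)) p := by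
  let e : α ↪o α ⊕ₗ β := OrderEmbedding.ofStrictMono _ Sum.Lex.inl_strictMono
  let f : β ↪o α ⊕ₗ β := OrderEmbedding.ofStrictMono _ Sum.Lex.inr_strictMono
  have hdisj : Disjoint (e.toEmbedding '' A) (f.toEmbedding '' B) := by
    rw [Set.disjoint_left]
    rintro _ ⟨a, _, rfl⟩ ⟨b, _, hab⟩
    exact Sum.inr_ne_inl hab
  have hflip : flip (Relation.Map r e.toEmbedding f.toEmbedding) =
      Relation.Map (flip r) f.toEmbedding e.toEmbedding := by
    ext y x
    exact ⟨fun ⟨a, b, hr, hx, hy⟩ => ⟨b, a, hr, hy, hx⟩,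
      fun ⟨b, a, hr, hy, hx⟩ => ⟨a, b, hr, hx, hy⟩⟩
  rw [← exactAt_image_map e, ← exactAt_image_map f,
    image_map_dowkerNonfaces e.toEmbedding f.toEmbedding,
    image_map_dowkerNonfaces f.toEmbedding e.toEmbedding, exactAt_dowkerNonfaces_flip hdisj, hflip]

end Dowker

section Taylor

variable {K : Type} [Field K] {n r : ℕ} (g : Fin r → Fin n → ℕ) {p j : ℕ}

lemma torRank_eq_zero_iff : torRank K g p j = 0 ↔
    ∀ z ∈ strand K g p j, bdT K g z = 0 → ∃ y ∈ strand K g (p + 1) j, bdT K g y = z := by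
  rw [torRank, Nat.sub_eq_zero_iff_le]
  constructor
  · intro h z hz hz0
    have hcycles := Submodule.eq_of_le_of_finrank_le inf_le_right h
    exact (hcycles.ge ⟨hz, hz0⟩).1
  · exact fun h => Submodule.finrank_mono (le_inf (fun z hz => h z hz.1 hz.2) le_rfl)

lemma mem_strand_iff {z : Finset (Fin r) →₀ K} :
    z ∈ strand K g p j ↔ ⇑z ∈ chains K {S | ∑ x, mlcm g S x = j} p := by
  have hspan : strand K g p j = Finsupp.supported K K {S | #S = p ∧ ∑ x, mlcm g S x = j} := by
    rw [Finsupp.supported_eq_span_single, strand]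
    congr 1
    ext c
    exact ⟨fun ⟨S, hp, hj, hc⟩ => ⟨S, ⟨hp, hj⟩, hc.symm⟩,
      fun ⟨S, ⟨hp, hj⟩, hc⟩ => ⟨S, hp, hj, hc.symm⟩⟩
  rw [hspan, Finsupp.mem_supported']
  exact ⟨fun h S hS => (of_not_not fun hn => hS (h S hn)).symm,
    fun h S hS => of_not_not fun hn => hS (h S hn).symm⟩

lemma bdT_single_apply (S' S : Finset (Fin r)) (c : K) :
    bdT K g (Finsupp.single S' c) S = ∑ k ∈ S', if S'.erase k = S ∧ mlcm g S = mlcm g S'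
      then insertSign K S' k * c else 0 := by
  rw [bdT, Finsupp.lsum_single, LinearMap.toSpanSingleton_apply, Finsupp.smul_apply,
    Finsupp.finsetSum_apply, smul_eq_mul, Finset.mul_sum]
  refine sum_congr rfl fun k _ => ?_
  by_cases hS : S'.erase k = S
  · subst hS
    split_ifs with h <;> simp_all [insertSign, mul_comm]
  · split_ifs <;> simp_all

/-- The Taylor differential retains exactly the terms of the simplicial boundary that preserve the
multidegree. -/
lemma bdT_apply (z : Finset (Fin r) →₀ K) (S : Finset (Fin r)) :
    bdT K g z S = boundary ({T | mlcm g T = mlcm g S}.indicator z) S := by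
  induction z using Finsupp.induction_linear with
  | zero => simp
  | add y z hy hz =>
    rw [map_add, Finsupp.add_apply, hy, hz, Finsupp.coe_add, Set.indicator_add', map_add,
      Pi.add_apply]
  | single S' c =>
    have hterm : ∀ k ∈ Sᶜ,
        insertSign K S k * {T | mlcm g T = mlcm g S}.indicator (Finsupp.single S' c) (insert k S) =
          if insert k S = S' ∧ mlcm g S = mlcm g S' then insertSign K S' k * c else 0 := by
      intro k _
      by_cases hS : insert k S = S'
      · subst hS
        rw [insertSign_insert_self, Set.indicator_apply]
        simp [eq_comm]
      · rw [if_neg fun h => hS h.1, Set.indicator_apply_eq_zero.2, mul_zero]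
        exact fun _ => Finsupp.single_eq_of_ne hS
    have hindex : {k ∈ S' | S'.erase k = S ∧ mlcm g S = mlcm g S'} =
        {k ∈ Sᶜ | insert k S = S' ∧ mlcm g S = mlcm g S'} := by
      ext k
      simp only [mem_filter, mem_compl, ← and_assoc]
      refine and_congr_left fun _ => ⟨?_, ?_⟩
      · rintro ⟨hk, rfl⟩
        exact ⟨notMem_erase k S', insert_erase hk⟩
      · rintro ⟨hk, rfl⟩
        exact ⟨mem_insert_self k S, erase_insert hk⟩
    rw [bdT_single_apply, boundary_apply, sum_congr rfl hterm, ← sum_filter, ← sum_filter, hindex]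

lemma exactAt_of_torRank_eq_zero (h : torRank K g p j = 0) {m : Fin n → ℕ} (hm : ∑ x, m x = j) :
    ExactAt K {S | mlcm g S = m} p := by
  intro z hz hz0
  have hstrand : Finsupp.equivFunOnFinite.symm z ∈ strand K g p j :=
    (mem_strand_iff g).2 fun S hS => by
      obtain ⟨rfl, hp⟩ := hz S hS
      exact ⟨hm, hp⟩
  obtain ⟨y, hy, hyz⟩ := (torRank_eq_zero_iff g).1 h _ hstrand <| by
    ext S
    rw [bdT_apply, Finsupp.coe_equivFunOnFinite_symm]
    by_cases hS : mlcm g S = m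
    · rw [hS, indicator_eq_self_of_mem_chains hz, hz0 S hS, Finsupp.zero_apply]
    · rw [Set.indicator_eq_zero'.2, map_zero, Pi.zero_apply, Finsupp.zero_apply]
      exact Set.disjoint_left.2 fun T hT hTS => hS (Eq.trans (Eq.symm hTS) (hz T hT).1)
  refine ⟨{S | mlcm g S = m}.indicator y,
    indicator_mem_chains ((mem_strand_iff g).1 hy), fun S hS => ?_⟩
  obtain rfl : mlcm g S = m := hS
  rw [← bdT_apply, hyz, Finsupp.coe_equivFunOnFinite_symm]

lemma torRank_eq_zero_of_forall_exactAt
    (h : ∀ m : Fin n → ℕ, ∑ x, m x = j → ExactAt K {S | mlcm g S = m} p) :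
    torRank K g p j = 0 := by
  refine (torRank_eq_zero_iff g).2 fun z hz hz0 => ?_
  rw [mem_strand_iff] at hz
  have hfill (m : Fin n → ℕ) (hm : ∑ x, m x = j) :
      ∃ y ∈ chains K {S | mlcm g S = m} (p + 1), ∀ S, mlcm g S = m → boundary y S = z S := by
    obtain ⟨y, hy, hyz⟩ := h m hm ({S | mlcm g S = m}.indicator z) (indicator_mem_chains hz) <| by
      rintro S rfl
      rw [← bdT_apply, hz0, Finsupp.zero_apply]
    refine ⟨y, hy, ?_⟩
    rintro S rfl
    rw [hyz S rfl]
    exact Set.indicator_of_mem (s := {T | mlcm g T = mlcm g S}) rfl _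
  choose! y hy hyz using hfill
  refine ⟨Finsupp.equivFunOnFinite.symm fun S => if ∑ x, mlcm g S x = j then y (mlcm g S) S else 0,
    (mem_strand_iff g).2 fun S hS => ?_, ?_⟩
  · obtain ⟨hj, hne⟩ := ite_ne_right_iff.1 hS
    exact ⟨hj, (hy _ hj S hne).2⟩
  · ext S
    rw [bdT_apply, Finsupp.coe_equivFunOnFinite_symm]
    by_cases hj : ∑ x, mlcm g S x = j
    · rw [← hyz _ hj S rfl, ← indicator_eq_self_of_mem_chains (hy _ hj)]
      refine congrArg (boundary · S) (Set.indicator_congr fun T (hT : mlcm g T = mlcm g S) => ?_)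
      rw [hT, if_pos hj]
    · rw [of_not_not fun hS => hj (hz S hS).1, Set.indicator_eq_zero'.2, map_zero, Pi.zero_apply]
      refine Set.disjoint_left.2 fun T hT hTS => hj ?_
      rw [← hTS]
      exact (ite_ne_right_iff.1 hT).1

end Taylor

section Hochster

variable {K : Type} [Field K] {n r : ℕ} {g : Fin r → Fin n → ℕ} {p j : ℕ}

lemma setOf_mlcm_eq_indicator (hg : ∀ k x, g k x ≤ 1) (W : Finset (Fin n)) :
    {S | mlcm g S = (W : Set (Fin n)).indicator 1} =
      dowkerNonfaces {k | ∀ x, g k x ≠ 0 → x ∈ W} (W : Set (Fin n)) fun k x => g k x = 0 := by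
  have hzero (S : Finset (Fin r)) (x : Fin n) : mlcm g S x = 0 ↔ ∀ k ∈ S, g k x = 0 :=
    Finset.sup_eq_bot_iff _ _
  have hle (S : Finset (Fin r)) (x : Fin n) : mlcm g S x ≤ 1 := Finset.sup_le fun k _ => hg k x
  ext S
  refine ⟨fun h => ⟨fun k hk x hx => ?_, fun ⟨x, hxW, hx⟩ => ?_⟩, fun ⟨hW, hcover⟩ => ?_⟩
  · by_contra hxW
    exact hx ((hzero S x).1 (by rw [h, Set.indicator_of_notMem (by exact hxW)]) k hk)
  · rw [← hzero, h, Set.indicator_of_mem hxW] at hx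
    exact one_ne_zero hx
  · ext x
    by_cases hxW : x ∈ W
    · rw [Set.indicator_of_mem (by exact hxW), Pi.one_apply]
      exact (hle S x).antisymm (Nat.one_le_iff_ne_zero.2 fun h0 =>
        hcover ⟨x, hxW, (hzero S x).1 h0⟩)
    · rw [Set.indicator_of_notMem (by exact hxW), hzero]
      exact fun k hk => of_not_not fun hne => hxW (hW hk x hne)

/-- **Hochster's formula** for the vanishing of the Betti numbers of a squarefree monomial ideal. -/
theorem torRank_eq_zero_iff_of_squarefree (hg : ∀ k x, g k x ≤ 1) :
    torRank K g p j = 0 ↔ ∀ W : Finset (Fin n), #W = j →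
      ExactAt K (dowkerNonfaces (W : Set (Fin n)) {k | ∀ x, g k x ≠ 0 → x ∈ W}
        fun x k => g k x = 0) p := by
  have hfib (W : Finset (Fin n)) :
      ExactAt K {S | mlcm g S = (W : Set (Fin n)).indicator 1} p ↔
        ExactAt K (dowkerNonfaces (W : Set (Fin n)) {k | ∀ x, g k x ≠ 0 → x ∈ W}
          fun x k => g k x = 0) p := by
    rw [setOf_mlcm_eq_indicator hg, exactAt_dowkerNonfaces_comm]
    rfl
  have hsum (W : Finset (Fin n)) : ∑ x, (W : Set (Fin n)).indicator (1 : Fin n → ℕ) x = #W := by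
    simp [Set.indicator_apply]
  refine ⟨fun h W hW => (hfib W).1 (exactAt_of_torRank_eq_zero g h ((hsum W).trans hW)),
    fun h => torRank_eq_zero_of_forall_exactAt g fun m hm => ?_⟩
  by_cases hsq : ∃ W : Finset (Fin n), m = (W : Set (Fin n)).indicator 1
  · obtain ⟨W, rfl⟩ := hsq
    exact (hfib W).2 (h W ((hsum W).symm.trans hm))
  · refine exactAt_of_forall_card_ne fun S hS =>
      absurd ⟨univ.filter fun x => m x ≠ 0, funext fun x => ?_⟩ hsq
    have hle : m x ≤ 1 := by
      rw [← show mlcm g S = m from hS]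
      exact Finset.sup_le fun k _ => hg k x
    by_cases hx : m x = 0
    · simp [hx]
    · simpa [hx] using hle.antisymm (Nat.one_le_iff_ne_zero.2 hx)

/-- The complements in `W` of the faces of `Δ` contained in `W`: up to a shift of degrees, the
relative complex they carry is the simplicial cochain complex of the restriction of `Δ` to `W`. -/
def complFaces {ι : Type*} [DecidableEq ι] (Δ : Set (Finset ι)) (W : Finset ι) : Set (Finset ι) :=
  {A | A ⊆ W ∧ W \ A ∈ Δ}

variable {G : SimpleGraph (Fin n)}

lemma edgeGens_le_one (k : Fin #(edgeFins G)) (x : Fin n) : edgeGens G k x ≤ 1 := by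
  rw [edgeGens]
  split_ifs <;> simp

lemma exists_adj_of_edgeGens (k : Fin #(edgeFins G)) :
    ∃ a b, G.Adj a b ∧ ∀ x, edgeGens G k x ≠ 0 ↔ x = a ∨ x = b := by
  obtain ⟨e, he⟩ : ∃ e, (edgeFins G).equivFin.symm k = e := ⟨_, rfl⟩
  obtain ⟨⟨a, b⟩, hab⟩ := e
  exact ⟨a, b, by simpa [edgeFins] using hab, fun x => by
    simp [edgeGens, he, ← Sym2.mem_iff]⟩

lemma exists_edgeGens_of_adj {a b : Fin n} (h : G.Adj a b) :
    ∃ k, ∀ x, edgeGens G k x ≠ 0 ↔ x = a ∨ x = b := by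
  have hab : s(a, b) ∈ edgeFins G := by simpa [edgeFins] using h
  exact ⟨(edgeFins G).equivFin ⟨s(a, b), hab⟩, fun x => by
    simp [edgeGens, or_iff_not_imp_left]⟩

lemma dowkerNonfaces_edgeGens (W : Finset (Fin n)) :
    dowkerNonfaces (W : Set (Fin n)) {k | ∀ x, edgeGens G k x ≠ 0 → x ∈ W}
      (fun x k => edgeGens G k x = 0) = complFaces (flagComplex Gᶜ) W := by
  ext A
  refine and_congr coe_subset ⟨fun h a ha b hb hab => ?_, fun h ⟨k, hkW, hk⟩ => ?_⟩
  · refine (SimpleGraph.compl_adj ..).2 ⟨hab, fun hG => h ?_⟩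
    obtain ⟨k, hk⟩ := exists_edgeGens_of_adj hG
    refine ⟨k, fun x hx => ?_, fun x hx => of_not_not fun hne => ?_⟩
    · rcases (hk x).1 hx with rfl | rfl
      exacts [(mem_sdiff.1 ha).1, (mem_sdiff.1 hb).1]
    · rcases (hk x).1 hne with rfl | rfl
      exacts [(mem_sdiff.1 ha).2 hx, (mem_sdiff.1 hb).2 hx]
  · obtain ⟨a, b, hG, hab⟩ := exists_adj_of_edgeGens k
    have hmem {x : Fin n} (hx : edgeGens G k x ≠ 0) : x ∈ W \ A :=
      mem_sdiff.2 ⟨hkW x hx, fun hxA => hx (hk x hxA)⟩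
    have hcompl := h a (hmem ((hab a).2 (Or.inl rfl))) b (hmem ((hab b).2 (Or.inr rfl))) hG.ne
    exact ((SimpleGraph.compl_adj ..).1 hcompl).2 hG

theorem gBetti_eq_zero_iff {i : ℕ} :
    gBetti K G i j = 0 ↔
      ∀ W : Finset (Fin n), #W = j → ExactAt K (complFaces (flagComplex Gᶜ) W) (i + 1) := by
  rw [gBetti, betti, torRank_eq_zero_iff_of_squarefree edgeGens_le_one]
  simp only [dowkerNonfaces_edgeGens]

lemma le_gPd {i : ℕ} (h : gBetti K G i j ≠ 0) : i ≤ gPd K G := by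
  refine le_csSup ⟨n, ?_⟩ ⟨j, h⟩
  rintro i' ⟨j', h'⟩
  by_contra! hn
  refine h' (gBetti_eq_zero_iff.2 fun W _ => exactAt_of_forall_card_ne fun X _ hX => ?_)
  have hcard := card_le_univ X
  rw [Fintype.card_fin] at hcard
  omega

end Hochster

section Pairing

variable {ι : Type} [LinearOrder ι] {R : Type*} [CommRing R]

variable (R) in
/-- The sign of the shuffle that lists `X` and then `W \ X`, up to a sign depending only on `#X`. -/
def shuffleSign (W X : Finset ι) : R :=
  ∏ a ∈ X, insertSign R W a

lemma isUnit_shuffleSign (W X : Finset ι) : IsUnit (shuffleSign R W X) :=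
  IsUnit.prod_iff.2 fun a _ => isUnit_insertSign W a

lemma shuffleSign_insert_mul {W Y : Finset ι} {a : ι} (ha : a ∈ W \ Y) (hY : Y ⊆ W) :
    shuffleSign R W (insert a Y) * insertSign R (W \ insert a Y) a =
      shuffleSign R W Y * insertSign R Y a := by
  obtain ⟨haW, haY⟩ := mem_sdiff.1 ha
  have hsplit := insertSign_mul_insertSign_sdiff (R := R) (insert_subset haW hY) a
  rw [insertSign_insert_self] at hsplit
  rw [shuffleSign, prod_insert haY, ← shuffleSign, ← hsplit]
  linear_combination shuffleSign R W Y * insertSign R Y a *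
    insertSign_mul_self (R := R) (W \ insert a Y) a

lemma single_sdiff_mem_chains_complFaces {Δ : Set (Finset ι)} {W F : Finset ι} (hFΔ : F ∈ Δ)
    (hFW : F ⊆ W) {p : ℕ} (hp : p + #F = #W) :
    Pi.single (W \ F) (1 : R) ∈ chains R (complFaces Δ W) p := by
  intro A hA
  obtain rfl : A = W \ F := of_not_not fun hne => hA (Pi.single_eq_of_ne hne _)
  refine ⟨⟨sdiff_subset, by rwa [Finset.sdiff_sdiff_eq_self hFW]⟩, ?_⟩
  rw [card_sdiff_of_subset hFW]
  omega

variable [Fintype ι]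

lemma boundary_sdiff {W X : Finset ι} (hXW : X ⊆ W) {y : Finset ι → R}
    (hy : ∀ Y, y Y ≠ 0 → Y ⊆ W) :
    boundary y (W \ X) = ∑ a ∈ X, insertSign R (W \ X) a * y (W \ X.erase a) := by
  have hsub : X ⊆ (W \ X)ᶜ := fun a ha => by simp [ha]
  rw [boundary_apply, ← sum_subset hsub]
  · exact sum_congr rfl fun a ha => by rw [sdiff_erase (hXW ha)]
  · intro a ha haX
    have hy0 : y (insert a (W \ X)) = 0 := of_not_not fun hne =>
      mem_compl.1 ha (mem_sdiff.2 ⟨hy _ hne (mem_insert_self a _), haX⟩)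
    rw [hy0, mul_zero]

lemma boundary_eq_sum_sdiff {W X : Finset ι} {c : Finset ι → R} (hc : ∀ Y, c Y ≠ 0 → Y ⊆ W) :
    boundary c X = ∑ a ∈ W \ X, insertSign R X a * c (insert a X) := by
  have hsub : W \ X ⊆ Xᶜ := fun a ha => mem_compl.2 (mem_sdiff.1 ha).2
  rw [boundary_apply, ← sum_subset hsub]
  intro a ha haW
  have hc0 : c (insert a X) = 0 := of_not_not fun hne =>
    haW (mem_sdiff.2 ⟨hc _ hne (mem_insert_self a X), mem_compl.1 ha⟩)
  rw [hc0, mul_zero]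

/-- Complementation in `W` makes the boundary its own adjoint: simplicial Alexander duality at the
level of chains. -/
lemma sum_shuffleSign_mul_boundary {W : Finset ι} {y c : Finset ι → R}
    (hy : ∀ Y, y Y ≠ 0 → Y ⊆ W) (hc : ∀ Y, c Y ≠ 0 → Y ⊆ W) :
    ∑ X ∈ W.powerset, shuffleSign R W X * boundary y (W \ X) * c X =
      ∑ Y ∈ W.powerset, shuffleSign R W Y * y (W \ Y) * boundary c Y := by
  have hleft : ∀ X ∈ W.powerset, shuffleSign R W X * boundary y (W \ X) * c X =
      ∑ a ∈ X, shuffleSign R W X * insertSign R (W \ X) a * y (W \ X.erase a) * c X := by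
    intro X hX
    rw [boundary_sdiff (mem_powerset.1 hX) hy, Finset.mul_sum, Finset.sum_mul]
    simp only [mul_assoc]
  have hright : ∀ Y ∈ W.powerset, shuffleSign R W Y * y (W \ Y) * boundary c Y =
      ∑ a ∈ W \ Y, shuffleSign R W Y * insertSign R Y a * y (W \ Y) * c (insert a Y) := by
    intro Y _
    rw [boundary_eq_sum_sdiff hc, Finset.mul_sum]
    exact sum_congr rfl fun a _ => by ring
  rw [sum_congr rfl hleft, sum_congr rfl hright, sum_sigma', sum_sigma']
  refine sum_bij' (fun q _ => ⟨q.1.erase q.2, q.2⟩) (fun q _ => ⟨insert q.2 q.1, q.2⟩)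
    ?_ ?_ ?_ ?_ ?_
  all_goals
    rintro ⟨X, a⟩ h
    simp only [mem_sigma, mem_powerset, mem_sdiff] at h ⊢
  · exact ⟨(erase_subset a X).trans h.1, h.1 h.2, notMem_erase a X⟩
  · exact ⟨insert_subset h.2.1 h.1, mem_insert_self a X⟩
  · rw [insert_erase h.2]
  · rw [erase_insert h.2.2]
  · have hsign := shuffleSign_insert_mul (R := R) (Y := X.erase a)
      (mem_sdiff.2 ⟨h.1 h.2, notMem_erase a X⟩) ((erase_subset a X).trans h.1)
    rw [insert_erase h.2] at hsign ⊢
    rw [hsign]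

lemma boundary_single_sdiff_eq_zero {Δ : Set (Finset ι)} {W F : Finset ι} (hFW : F ⊆ W)
    (hfacet : ∀ a ∈ W \ F, insert a F ∉ Δ) {A : Finset ι} (hA : A ∈ complFaces Δ W) :
    boundary (Pi.single (W \ F) (1 : R)) A = 0 := by
  by_contra hne
  obtain ⟨a, haA, hza⟩ := exists_insert_ne_zero_of_boundary_ne_zero hne
  have heq : insert a A = W \ F := of_not_not fun hne => hza (Pi.single_eq_of_ne hne _)
  have haWF : a ∈ W \ F := heq ▸ mem_insert_self a A
  have hcompl : W \ A = insert a F := by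
    rw [← erase_insert haA, heq, sdiff_erase (mem_sdiff.1 haWF).1,
      Finset.sdiff_sdiff_eq_self hFW]
  exact hfacet a haWF (hcompl ▸ hA.2)

/-- A cycle that is nonzero on a facet is detected by the cochain dual to that facet. -/
lemma not_exactAt_complFaces_of_facet {Δ : Set (Finset ι)} {W F : Finset ι} {c : Finset ι → R}
    {k p : ℕ} (hc : c ∈ chains R (restrictComplex Δ W) k) (hbd : boundary c = 0) (hF : c F ≠ 0)
    (hfacet : ∀ a ∈ W \ F, insert a F ∉ Δ) (hp : p + k = #W) :
    ¬ExactAt R (complFaces Δ W) p := by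
  intro hexact
  obtain ⟨⟨hFΔ, hFW⟩, rfl⟩ := hc F hF
  obtain ⟨y, hy, hyz⟩ := hexact _ (single_sdiff_mem_chains_complFaces hFΔ hFW hp)
    fun A hA => boundary_single_sdiff_eq_zero hFW hfacet hA
  have hterm : ∀ X ∈ W.powerset, X ≠ F →
      shuffleSign R W X * boundary y (W \ X) * c X = 0 := by
    intro X _ hXF
    by_cases hcX : c X = 0
    · rw [hcX, mul_zero]
    obtain ⟨⟨hXΔ, hXW⟩, _⟩ := hc X hcX
    have hne : W \ X ≠ W \ F := fun heq => hXF <| by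
      rw [← Finset.sdiff_sdiff_eq_self hXW, heq, Finset.sdiff_sdiff_eq_self hFW]
    rw [hyz _ ⟨sdiff_subset, by rwa [Finset.sdiff_sdiff_eq_self hXW]⟩, Pi.single_eq_of_ne hne,
      mul_zero, zero_mul]
  have hpair := sum_shuffleSign_mul_boundary (W := W) (y := y) (c := c)
    (fun Y hY => (hy Y hY).1.1) (fun Y hY => (hc Y hY).1.2)
  rw [sum_eq_single_of_mem F (mem_powerset.2 hFW) hterm, hbd,
    hyz _ ⟨sdiff_subset, by rwa [Finset.sdiff_sdiff_eq_self hFW]⟩, Pi.single_eq_same,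
    mul_one] at hpair
  simp only [Pi.zero_apply, mul_zero, sum_const_zero] at hpair
  exact hF ((isUnit_shuffleSign W F).mul_right_eq_zero.1 hpair)

end Pairing

section Cycles

variable {ι : Type} {H : SimpleGraph ι} {l : ℕ} {f : ZMod l → ι}

/-- The vertices `f i`, in cyclic order, form an induced cycle of length `l` in `H`. -/
structure IsInducedCycle (H : SimpleGraph ι) (f : ZMod l → ι) : Prop where
  injective : Function.Injective f
  adj_iff : ∀ i j, H.Adj (f i) (f j) ↔ j = i + 1 ∨ i = j + 1

lemma natCast_ne_zero_of_pos_of_lt {m l : ℕ} (hm : 0 < m) (hml : m < l) : (m : ZMod l) ≠ 0 := by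
  rw [Ne, ZMod.natCast_eq_zero_iff]
  exact Nat.not_dvd_of_pos_of_lt hm hml

section

variable [DecidableEq ι]

lemma IsInducedCycle.insert_notMem_flagComplex (hf : IsInducedCycle H f) (hl : 3 < l) {i k : ZMod l}
    (hk : f k ∉ ({f i, f (i + 1)} : Finset ι)) :
    insert (f k) {f i, f (i + 1)} ∉ flagComplex H := by
  intro h
  have hki : f k ≠ f i := fun h => hk (by simp [h])
  have hki' : f k ≠ f (i + 1) := fun h => hk (by simp [h])
  have hik : i = k + 1 := ((hf.adj_iff k i).1 (h _ (by simp) _ (by simp) hki)).resolve_right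
    fun h => hki' (by rw [h])
  have hki₂ : k = i + 1 + 1 := ((hf.adj_iff k (i + 1)).1
    (h _ (by simp) _ (by simp) hki')).resolve_left fun h => hki (by rw [add_right_cancel h])
  refine natCast_ne_zero_of_pos_of_lt (m := 3) (by norm_num) hl ?_
  push_cast
  linear_combination -hik - hki₂

variable (f) in
/-- The vertex set of the closed walk `f`. -/
def cycleVertices [NeZero l] : Finset ι :=
  univ.image f

lemma mem_cycleVertices [NeZero l] {v : ι} : v ∈ cycleVertices f ↔ ∃ i, f i = v := by
  simp [cycleVertices]

lemma pair_subset_cycleVertices [NeZero l] (i : ZMod l) :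
    {f i, f (i + 1)} ⊆ cycleVertices f := by
  simp [insert_subset_iff, mem_cycleVertices]

lemma IsInducedCycle.card_cycleVertices [NeZero l] (hf : IsInducedCycle H f) :
    #(cycleVertices f) = l := by
  rw [cycleVertices, card_image_of_injective _ hf.injective, card_univ, ZMod.card]

lemma IsInducedCycle.card_le_two [NeZero l] (hf : IsInducedCycle H f) (hl : 3 < l) {A : Finset ι}
    (hA : A ∈ restrictComplex (flagComplex H) (cycleVertices f)) : #A ≤ 2 := by
  obtain ⟨hclique, hAC⟩ := hA
  by_contra! hcard
  obtain ⟨i, hi, hi'⟩ : ∃ i, f i ∈ A ∧ f (i + 1) ∈ A := by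
    obtain ⟨a, ha, b, hb, hab⟩ := one_lt_card.1 (one_lt_two.trans hcard)
    obtain ⟨i, rfl⟩ := mem_cycleVertices.1 (hAC ha)
    obtain ⟨j, rfl⟩ := mem_cycleVertices.1 (hAC hb)
    rcases (hf.adj_iff i j).1 (hclique _ ha _ hb hab) with rfl | rfl
    · exact ⟨i, ha, hb⟩
    · exact ⟨j, hb, ha⟩
  obtain ⟨a, ha, haF⟩ := exists_mem_notMem_of_card_lt_card (Finset.card_le_two.trans_lt hcard)
  obtain ⟨k, rfl⟩ := mem_cycleVertices.1 (hAC ha)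
  have hsub : insert (f k) {f i, f (i + 1)} ⊆ A := by
    simp only [insert_subset_iff, singleton_subset_iff, ha, hi, hi', and_self]
  exact hf.insert_notMem_flagComplex hl haF fun x hx y hy => hclique x (hsub hx) y (hsub hy)

end

variable [LinearOrder ι]

/-- The `1`-cycle that runs once around the closed walk `f`. -/
def cycleChain (R : Type*) [CommRing R] [NeZero l] (f : ZMod l → ι) : Finset ι → R :=
  ∑ i, cone (f i) (cone (f (i + 1)) (Pi.single ∅ 1))

variable {R : Type*} [CommRing R]

lemma single_empty_mem_chains : Pi.single ∅ (1 : R) ∈ chains R ({∅} : Set (Finset ι)) 0 := by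
  intro X hX
  obtain rfl : X = ∅ := of_not_not fun hne => hX (Pi.single_eq_of_ne hne _)
  exact ⟨rfl, card_empty⟩

lemma IsInducedCycle.cycleChain_mem_chains [NeZero l] (hf : IsInducedCycle H f) :
    cycleChain R f ∈ chains R (restrictComplex (flagComplex H) (cycleVertices f)) 2 := by
  refine sum_mem fun i _ => cone_mem_chains (C := {{f (i + 1)}}) (cone_mem_chains
    single_empty_mem_chains fun X hX => ?_) fun X hX => ?_
  · rw [Set.mem_singleton_iff.1 hX, insert_empty_eq, Set.mem_singleton_iff]
  · have hadj := (hf.adj_iff i (i + 1)).2 (.inl rfl)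
    rw [Set.mem_singleton_iff.1 hX]
    refine ⟨fun x hx y hy hxy => ?_, pair_subset_cycleVertices i⟩
    simp only [mem_insert, mem_singleton] at hx hy
    rcases hx with rfl | rfl <;> rcases hy with rfl | rfl
    exacts [absurd rfl hxy, hadj, hadj.symm, absurd rfl hxy]

lemma IsInducedCycle.cycleChain_ne_zero [NeZero l] [Nontrivial R] (hf : IsInducedCycle H f)
    (hl : 2 < l) (i : ZMod l) : cycleChain R f {f i, f (i + 1)} ≠ 0 := by
  have h1 : (1 : ZMod l) ≠ 0 := by
    simpa using natCast_ne_zero_of_pos_of_lt one_pos (one_lt_two.trans hl)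
  have h2 : (2 : ZMod l) ≠ 0 := by simpa using natCast_ne_zero_of_pos_of_lt two_pos hl
  have hne : f (i + 1) ≠ f i := hf.injective.ne (by simpa using h1)
  rw [cycleChain, Finset.sum_apply, sum_eq_single_of_mem i (mem_univ i)]
  · rw [cone_ne_zero_iff, cone_ne_zero_iff]
    have herase : (({f i, f (i + 1)} : Finset ι).erase (f i)).erase (f (i + 1)) = ∅ := by
      rw [erase_insert (by simpa using hne.symm), erase_singleton]
    exact ⟨by simp, by simp [hne], by rw [herase, Pi.single_eq_same]; exact one_ne_zero⟩
  · intro j _ hji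
    by_contra h
    obtain ⟨hj, h⟩ := cone_ne_zero_iff.1 h
    have hj' := mem_of_mem_erase (cone_ne_zero_iff.1 h).1
    simp only [mem_insert, mem_singleton, hf.injective.eq_iff, add_left_inj, hji, or_false,
      false_or] at hj hj'
    exact h2 (by linear_combination hj' - hj)

variable [Fintype ι]

lemma boundary_cycleChain [NeZero l] : boundary (cycleChain R f) = 0 := by
  have hedge : ∀ i, boundary (cone (f i) (cone (f (i + 1)) (Pi.single ∅ (1 : R)))) =
      cone (f (i + 1)) (Pi.single ∅ 1) - cone (f i) (Pi.single ∅ 1) := fun i => by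
    rw [boundary_cone, boundary_cone_of_boundary_eq_zero boundary_single_empty]
  rw [cycleChain, map_sum, sum_congr rfl fun i _ => hedge i, sum_sub_distrib, sub_eq_zero]
  exact Equiv.sum_comp (Equiv.addRight (1 : ZMod l)) fun i => cone (f i) (Pi.single ∅ (1 : R))

end Cycles

section Elimination

variable {ι : Type} {H : SimpleGraph ι}

lemma isLowerSet_flagComplex : IsLowerSet (flagComplex H) :=
  fun _ _ hsub hF a ha b hb => hF a (hsub ha) b (hsub hb)

lemma sup_eq_iff_of_injOn {W F : Finset ι} {rank : ι → ℕ} (hinj : Set.InjOn rank W) (hFW : F ⊆ W)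
    {v : ι} (hv : v ∈ W) (h0 : rank v ≠ 0) :
    F.sup rank = rank v ↔ v ∈ F ∧ ∀ w ∈ F, w ≠ v → rank w < rank v := by
  refine ⟨fun h => ?_, fun ⟨hvF, h⟩ => le_antisymm (Finset.sup_le fun w hw => ?_) (le_sup hvF)⟩
  · have hne : F.Nonempty := nonempty_iff_ne_empty.2 fun he => h0 (by rw [← h, he, sup_empty]; rfl)
    obtain ⟨w, hw, hwv⟩ := exists_mem_eq_sup F hne rank
    obtain rfl := hinj (hFW hw) hv (hwv.symm.trans h)
    exact ⟨hw, fun x hx hxw => (h ▸ le_sup (f := rank) hx).lt_of_ne fun heq =>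
      hxw (hinj (hFW hx) hv heq)⟩
  · obtain rfl | hwv := eq_or_ne w v
    exacts [le_rfl, (h w hw hwv).le]

section

variable [DecidableEq ι]

lemma mem_flagComplex_of_erase_mem {F : Finset ι} {u : ι} (hF : F.erase u ∈ flagComplex H)
    (hu : ∀ w ∈ F, w ≠ u → H.Adj w u) : F ∈ flagComplex H := by
  intro a ha b hb hab
  by_cases hau : a = u
  · subst hau
    exact (hu b hb hab.symm).symm
  by_cases hbu : b = u
  · subst hbu
    exact hu a ha hab
  exact hF a (mem_erase.2 ⟨hau, ha⟩) b (mem_erase.2 ⟨hbu, hb⟩) hab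

lemma insert_mem_flagComplex {F : Finset ι} {v : ι} (hF : F ∈ flagComplex H) (hv : v ∉ F)
    (hadj : ∀ w ∈ F, H.Adj w v) : insert v F ∈ flagComplex H :=
  mem_flagComplex_of_erase_mem (by rwa [erase_insert hv]) fun w hw hwv =>
    hadj w (mem_of_mem_insert_of_ne hw hwv)

lemma erase_root_mem_fiber_iff {W F : Finset ι} {rank : ι → ℕ} (hinj : Set.InjOn rank W)
    (hFW : F ⊆ W) {u : ι} (hu : u ∈ W) (h0 : rank u = 0) :
    F.erase u ∈ {F ∈ flagComplex H | F.sup rank = 0} ↔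
      F ∈ {F ∈ flagComplex H | F.sup rank = 0} := by
  have hsup : (F.erase u).sup rank = 0 ↔ F.sup rank = 0 := by
    simp only [← bot_eq_zero, Finset.sup_eq_bot_iff, mem_erase]
    exact ⟨fun h w hw => (eq_or_ne w u).elim (fun hwu => hwu ▸ h0) fun hwu => h w ⟨hwu, hw⟩,
      fun h w hw => h w hw.2⟩
  refine ⟨fun h => ⟨mem_flagComplex_of_erase_mem h.1 fun w hw hwu => ?_, hsup.1 h.2⟩,
    fun h => ⟨isLowerSet_flagComplex (erase_subset u F) h.1, hsup.2 h.2⟩⟩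
  have hw0 : rank w = 0 := Nat.le_zero.1 (hsup.1 h.2 ▸ le_sup (f := rank) hw)
  exact absurd (hinj (hFW hw) hu (hw0.trans h0.symm)) hwu

lemma erase_parent_mem_fiber_iff {W F : Finset ι} {rank : ι → ℕ} (hinj : Set.InjOn rank W)
    (hFW : F ⊆ W) {u v : ι} (hv : v ∈ W) (hlt : rank u < rank v) (hadj : H.Adj u v)
    (hcommon : ∀ w ∈ W, rank w < rank v → H.Adj w v → w = u ∨ H.Adj w u) :
    F.erase u ∈ {F ∈ flagComplex H | F.sup rank = rank v} ↔
      F ∈ {F ∈ flagComplex H | F.sup rank = rank v} := by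
  have hsup : (F.erase u).sup rank = rank v ↔ F.sup rank = rank v := by
    rw [sup_eq_iff_of_injOn hinj ((erase_subset u F).trans hFW) hv hlt.ne_bot,
      sup_eq_iff_of_injOn hinj hFW hv hlt.ne_bot]
    refine and_congr (mem_erase.trans (and_iff_right hadj.ne')) ⟨fun h w hw hwv => ?_,
      fun h w hw => h w (mem_of_mem_erase hw)⟩
    obtain rfl | hwu := eq_or_ne w u
    exacts [hlt, h w (mem_erase.2 ⟨hwu, hw⟩) hwv]
  refine ⟨fun h => ⟨mem_flagComplex_of_erase_mem h.1 fun w hw hwu => ?_, hsup.1 h.2⟩,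
    fun h => ⟨isLowerSet_flagComplex (erase_subset u F) h.1, hsup.2 h.2⟩⟩
  obtain ⟨hvF, hrank⟩ := (sup_eq_iff_of_injOn hinj hFW hv hlt.ne_bot).1 (hsup.1 h.2)
  obtain rfl | hwv := eq_or_ne w v
  · exact hadj.symm
  have hwv' := h.1 w (mem_erase.2 ⟨hwu, hw⟩) v (mem_erase.2 ⟨hadj.ne', hvF⟩) hwv
  exact (hcommon w (hFW hw) (hrank w hw hwv) hwv').resolve_left hwu

end

variable [LinearOrder ι] [Fintype ι] {R : Type*} [CommRing R]

lemma exactAt_complFaces_of_cone {Δ : Set (Finset ι)} {W : Finset ι} {u : ι} (hu : u ∈ W)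
    (h : ∀ F ⊆ W, F.erase u ∈ Δ ↔ F ∈ Δ) (p : ℕ) : ExactAt R (complFaces Δ W) p :=
  exactAt_of_cone (fun X => and_congr (insert_subset_iff.trans (and_iff_right hu)) <| by
    rw [sdiff_insert, h _ sdiff_subset]) p

lemma exactAt_complFaces_flagComplex_of_forall_adj {W : Finset ι} {u : ι} (hu : u ∈ W)
    (hadj : ∀ w, w ≠ u → H.Adj w u) (p : ℕ) : ExactAt R (complFaces (flagComplex H) W) p :=
  exactAt_complFaces_of_cone hu (fun F _ =>
    ⟨fun hF => mem_flagComplex_of_erase_mem hF fun w _ => hadj w,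
    fun hF => isLowerSet_flagComplex (erase_subset u F) hF⟩) p

lemma exactAt_complFaces_of_fibers {α : Type*} [PartialOrder α] {ψ : Finset ι → α}
    (hψ : Monotone ψ) {Δ : Set (Finset ι)} (hΔ : IsLowerSet Δ) {W : Finset ι}
    (h : ∀ s p, ExactAt R (complFaces {F ∈ Δ | ψ F = s} W) p) (p : ℕ) :
    ExactAt R (complFaces Δ W) p := by
  refine exactAt_of_fibers (α := αᵒᵈ) (φ := fun A => OrderDual.toDual (ψ (W \ A)))
    (fun A B hAB => OrderDual.toDual_le_toDual.2 (hψ (sdiff_subset_sdiff le_rfl hAB)))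
    ⟨fun A hA B hB X hX => ?_⟩ (fun s q => ?_) p
  · exact ⟨hX.2.trans hB.1, hΔ (sdiff_subset_sdiff le_rfl hX.1) hA.2⟩
  · convert h (OrderDual.ofDual s) q using 1
    ext A
    exact and_assoc

/-- In the clique complex, the last vertex `v` of a face can be completed by its parent `u`: the
vertices that precede `v` and are adjacent to it lie in the closed neighbourhood of `u`. -/
lemma exactAt_complFaces_flagComplex_of_parents {W : Finset ι} {rank : ι → ℕ}
    (hinj : Set.InjOn rank W) {root : ι} (hroot : root ∈ W) (hroot0 : rank root = 0)
    (hparent : ∀ v ∈ W, rank v ≠ 0 → ∃ u ∈ W, rank u < rank v ∧ H.Adj u v ∧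
      ∀ w ∈ W, rank w < rank v → H.Adj w v → w = u ∨ H.Adj w u) (p : ℕ) :
    ExactAt R (complFaces (flagComplex H) W) p := by
  refine exactAt_complFaces_of_fibers (ψ := fun F => F.sup rank) (fun _ _ => sup_mono)
    isLowerSet_flagComplex (fun s q => ?_) p
  obtain rfl | hs := eq_or_ne s 0
  · exact exactAt_complFaces_of_cone hroot
      (fun F hFW => erase_root_mem_fiber_iff hinj hFW hroot hroot0) q
  by_cases hv : ∃ v ∈ W, rank v = s
  · obtain ⟨v, hvW, rfl⟩ := hv
    obtain ⟨u, huW, hlt, hadj, hcommon⟩ := hparent v hvW hs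
    exact exactAt_complFaces_of_cone huW
      (fun F hFW => erase_parent_mem_fiber_iff hinj hFW hvW hlt hadj hcommon) q
  · refine exactAt_of_forall_card_ne fun A ⟨_, _, hsup⟩ => absurd ?_ hv
    have hne : (W \ A).Nonempty :=
      nonempty_iff_ne_empty.2 fun he => hs (by rw [← hsup, he, sup_empty]; rfl)
    obtain ⟨v, hv, hvs⟩ := exists_mem_eq_sup _ hne rank
    exact ⟨v, (mem_sdiff.1 hv).1, hvs.symm.trans hsup⟩

end Elimination

section InducedCycleComplexes

variable {ι : Type} [LinearOrder ι] {H : SimpleGraph ι} {l : ℕ} [NeZero l] {f : ZMod l → ι}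
  {v v' : ι} {R : Type*} [CommRing R]

lemma IsInducedCycle.cone_cycleChain_mem_chains (hf : IsInducedCycle H f)
    (hv : v ∉ cycleVertices f) (hadj : ∀ w ∈ cycleVertices f, H.Adj w v) {W : Finset ι}
    (hW : insert v (cycleVertices f) ⊆ W) :
    cone v (cycleChain R f) ∈ chains R (restrictComplex (flagComplex H) W) 3 :=
  cone_mem_chains hf.cycleChain_mem_chains fun _ hF =>
    ⟨insert_mem_flagComplex hF.1 (fun h => hv (hF.2 h)) fun w hw => hadj w (hF.2 hw),
      (insert_subset_insert v hF.2).trans hW⟩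

lemma IsInducedCycle.insert_insert_notMem_flagComplex (hf : IsInducedCycle H f) (hl : 3 < l)
    (hne : v ≠ v') (hvv' : ¬H.Adj v v') {i : ZMod l} {a : ι}
    (ha : a ∈ insert v (insert v' (cycleVertices f)) \ insert v {f i, f (i + 1)}) :
    insert a (insert v {f i, f (i + 1)}) ∉ flagComplex H := by
  intro hclique
  simp only [mem_sdiff, mem_insert, not_or] at ha
  obtain ⟨rfl | rfl | haC, hav, haF⟩ := ha
  · exact hav rfl
  · exact hvv' (hclique v (by simp) a (by simp) hne)
  · obtain ⟨k, rfl⟩ := mem_cycleVertices.1 haC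
    exact hf.insert_notMem_flagComplex (i := i) hl (by simpa using haF)
      (isLowerSet_flagComplex (insert_subset_insert _ (subset_insert _ _)) hclique)

lemma val_sub_one_add_one {a : ZMod l} (ha : a ≠ 0) : (a - 1).val + 1 = a.val := by
  obtain ⟨m, rfl⟩ := Nat.exists_eq_succ_of_ne_zero (NeZero.ne l)
  have hpos : 0 < a.val := Nat.pos_of_ne_zero ((ZMod.val_ne_zero a).2 ha)
  have hval : (a - 1).val = a.val - 1 := Fin.val_sub_one_of_ne_zero ha
  omega

variable [Fintype ι]

lemma IsInducedCycle.not_exactAt_complFaces_of_subset [Nontrivial R] (hf : IsInducedCycle H f)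
    (hl : 3 < l) {W : Finset ι} (hCW : cycleVertices f ⊆ W) {i : ZMod l}
    (hW : ∀ v ∈ W \ cycleVertices f, ¬H.Adj v (f i)) {p : ℕ} (hp : p + 2 = #W) :
    ¬ExactAt R (complFaces (flagComplex H) W) p := by
  refine not_exactAt_complFaces_of_facet
    (chains_mono (fun A hA => And.intro hA.1 (hA.2.trans hCW)) 2 hf.cycleChain_mem_chains)
    boundary_cycleChain (hf.cycleChain_ne_zero (by omega) i) (fun a ha => ?_) hp
  obtain ⟨haW, haF⟩ := mem_sdiff.1 ha
  by_cases haC : a ∈ cycleVertices f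
  · obtain ⟨k, rfl⟩ := mem_cycleVertices.1 haC
    exact hf.insert_notMem_flagComplex hl haF
  · exact fun hclique => hW a (mem_sdiff.2 ⟨haW, haC⟩)
      (hclique a (by simp) (f i) (by simp) fun h => haF (by simp [h]))

lemma IsInducedCycle.exactAt_complFaces_cycleVertices (hf : IsInducedCycle H f) (hl : 3 < l)
    {p : ℕ} (hp : p + 3 = l) : ExactAt R (complFaces (flagComplex H) (cycleVertices f)) p :=
  exactAt_of_forall_card_ne fun X ⟨hXC, hclique⟩ hX => by
    have hcard := hf.card_le_two hl ⟨hclique, sdiff_subset⟩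
    rw [card_sdiff_of_subset hXC, hf.card_cycleVertices] at hcard
    omega

/-- The cycle and the two further vertices span a suspension of a circle, i.e. a `2`-sphere. -/
lemma IsInducedCycle.not_exactAt_complFaces_suspension [Nontrivial R] (hf : IsInducedCycle H f)
    (hl : 3 < l) (hv : v ∉ cycleVertices f) (hv' : v' ∉ cycleVertices f) (hne : v ≠ v')
    (hvv' : ¬H.Adj v v') (hadj : ∀ w ∈ cycleVertices f, H.Adj w v)
    (hadj' : ∀ w ∈ cycleVertices f, H.Adj w v') {p : ℕ} (hp : p + 1 = l) :
    ¬ExactAt R (complFaces (flagComplex H) (insert v (insert v' (cycleVertices f)))) p := by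
  have hFC := pair_subset_cycleVertices (f := f) 0
  have hv'F : v' ∉ insert v {f 0, f (0 + 1)} := fun h =>
    (mem_insert.1 h).elim hne.symm fun h => hv' (hFC h)
  refine not_exactAt_complFaces_of_facet (sub_mem
      (hf.cone_cycleChain_mem_chains hv hadj (insert_subset_insert v (subset_insert v' _)))
      (hf.cone_cycleChain_mem_chains hv' hadj' (subset_insert v _)))
    (F := insert v {f 0, f (0 + 1)}) ?_ ?_
    (fun a => hf.insert_insert_notMem_flagComplex hl hne hvv') ?_
  · rw [map_sub, boundary_cone_of_boundary_eq_zero boundary_cycleChain,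
      boundary_cone_of_boundary_eq_zero boundary_cycleChain, sub_self]
  · rw [Pi.sub_apply, cone_of_notMem hv'F, sub_zero, cone_ne_zero_iff,
      erase_insert fun h => hv (hFC h)]
    exact ⟨mem_insert_self v _, hf.cycleChain_ne_zero (by omega) 0⟩
  · rw [card_insert_of_notMem (by simp [hne, hv]), card_insert_of_notMem hv', hf.card_cycleVertices]
    omega

/-- Removing a vertex from the cycle leaves a path, whose vertices are ranked by their distance from
one end. -/
lemma IsInducedCycle.exactAt_complFaces_erase (hf : IsInducedCycle H f) (k : ZMod l) (p : ℕ) :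
    ExactAt R (complFaces (flagComplex H) ((cycleVertices f).erase (f k))) p := by
  set rank : ι → ℕ := Function.extend f (fun i => (i - (k + 1)).val) 0
  have hrank : ∀ i, rank (f i) = (i - (k + 1)).val := hf.injective.extend_apply _ _
  have hadj : ∀ i, H.Adj (f i) (f (i + 1)) := fun i => (hf.adj_iff i (i + 1)).2 (.inl rfl)
  have hmem : ∀ v, v ∈ (cycleVertices f).erase (f k) ↔ ∃ i ≠ k, f i = v := fun v => by
    rw [mem_erase, mem_cycleVertices]
    exact ⟨fun ⟨hne, i, hi⟩ => ⟨i, fun hik => hne (by rw [← hi, hik]), hi⟩,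
      fun ⟨i, hik, hi⟩ => ⟨fun h => hik (hf.injective (hi.trans h)), i, hi⟩⟩
  have hsucc : ∀ i ≠ k, rank (f (i + 1)) = rank (f i) + 1 := fun i hik => by
    rw [hrank, hrank, add_sub_add_right_eq_sub, ← val_sub_one_add_one (sub_ne_zero.2 hik), sub_sub]
  refine exactAt_complFaces_flagComplex_of_parents (rank := rank) (root := f (k + 1)) ?_
    ((hmem _).2 ⟨k + 1, fun h => (hadj k).ne (by rw [h]), rfl⟩)
    (by rw [hrank, sub_self, ZMod.val_zero]) ?_ p
  · intro u hu v hv huv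
    obtain ⟨i, _, rfl⟩ := (hmem u).1 hu
    obtain ⟨j, _, rfl⟩ := (hmem v).1 hv
    rw [hrank, hrank] at huv
    rw [sub_left_injective (ZMod.val_injective l huv)]
  · intro v hv hv0
    obtain ⟨i, hik, rfl⟩ := (hmem v).1 hv
    obtain ⟨j, rfl⟩ : ∃ j, j + 1 = i := ⟨i - 1, sub_add_cancel i 1⟩
    have hjk : j ≠ k := fun h => hv0 (by rw [hrank, h, sub_self, ZMod.val_zero])
    refine ⟨f j, (hmem _).2 ⟨j, hjk, rfl⟩, by rw [hsucc j hjk]; exact Nat.lt_succ_self _, hadj j,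
      fun w hw hlt hwadj => ?_⟩
    obtain ⟨m, _, rfl⟩ := (hmem w).1 hw
    rcases (hf.adj_iff m (j + 1)).1 hwadj with h | rfl
    · exact Or.inl (by rw [add_right_cancel h])
    · exact absurd hlt (by rw [hsucc _ hik]; exact (Nat.lt_succ_self _).not_gt)

end InducedCycleComplexes

section EdgeIdeals

variable {K : Type} [Field K] {n : ℕ} {G : SimpleGraph (Fin n)} {i j : ℕ}

lemma gIndex_le (hij : i + 2 < j) (h : gBetti K G i j ≠ 0) : gIndex K G ≤ i :=
  sInf_le ⟨i, j, rfl, hij, h⟩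

lemma exists_gIndex_eq (h : gIndex K G ≠ ⊤) :
    ∃ i j : ℕ, gIndex K G = i ∧ i + 2 < j ∧ gBetti K G i j ≠ 0 :=
  csInf_mem (Set.nonempty_iff_ne_empty.2 fun hempty => h ((congrArg sInf hempty).trans sInf_empty))

lemma AMFI.gIndex_ne_top (h : AMFI K G) : gIndex K G ≠ ⊤ := fun htop => by
  rw [AMFI, htop, top_add] at h
  exact ENat.top_ne_natCast _ h

lemma gBetti_ne_zero_of_not_exactAt {W : Finset (Fin n)}
    (h : ¬ExactAt K (complFaces (flagComplex Gᶜ) W) (i + 1)) : gBetti K G i #W ≠ 0 :=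
  fun h0 => h (gBetti_eq_zero_iff.1 h0 W rfl)

variable {l : ℕ} [NeZero l] {f : ZMod l → Fin n}

lemma IsInducedCycle.gBetti_ne_zero (hf : IsInducedCycle Gᶜ f) (hl : 3 < l) (hi : i + 3 = l) :
    gBetti K G i l ≠ 0 := by
  rw [← hf.card_cycleVertices]
  refine gBetti_ne_zero_of_not_exactAt (hf.not_exactAt_complFaces_of_subset hl subset_rfl (i := 0)
    (by simp) ?_)
  rw [hf.card_cycleVertices, ← hi]

lemma IsInducedCycle.not_adj_of_mem_cycleVertices (hf : IsInducedCycle Gᶜ f) (hl : 3 < l)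
    (hpd : gPd K G + 2 < l) {v w : Fin n} (hv : v ∉ cycleVertices f) (hw : w ∈ cycleVertices f) :
    ¬G.Adj v w := by
  obtain ⟨i, rfl⟩ := mem_cycleVertices.1 hw
  intro hadj
  have hne : gBetti K G (l - 2) #(insert v (cycleVertices f)) ≠ 0 := by
    refine gBetti_ne_zero_of_not_exactAt (hf.not_exactAt_complFaces_of_subset hl
      (subset_insert v _) (i := i) (fun u hu => ?_) ?_)
    · obtain rfl : u = v := (mem_insert.1 (mem_sdiff.1 hu).1).resolve_right (mem_sdiff.1 hu).2
      exact fun hcompl => ((SimpleGraph.compl_adj ..).1 hcompl).2 hadj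
    · rw [card_insert_of_notMem hv, hf.card_cycleVertices]
      omega
  have := le_gPd hne
  omega

lemma IsInducedCycle.not_adj_of_notMem_cycleVertices (hf : IsInducedCycle Gᶜ f) (hl : 3 < l)
    (hpd : gPd K G + 2 < l) {v : Fin n} (hv : v ∉ cycleVertices f) (w : Fin n) : ¬G.Adj v w := by
  by_cases hw : w ∈ cycleVertices f
  · exact hf.not_adj_of_mem_cycleVertices hl hpd hv hw
  intro hvw
  have hcompl : ∀ u ∉ cycleVertices f, ∀ x ∈ cycleVertices f, Gᶜ.Adj x u := fun u hu x hx =>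
    (SimpleGraph.compl_adj ..).2 ⟨fun h => hu (h ▸ hx), fun hxu =>
      hf.not_adj_of_mem_cycleVertices hl hpd hu hx hxu.symm⟩
  have hne := gBetti_ne_zero_of_not_exactAt (K := K) (i := l - 2)
    (hf.not_exactAt_complFaces_suspension hl hv hw hvw.ne
      (fun h => ((SimpleGraph.compl_adj ..).1 h).2 hvw) (hcompl v hv) (hcompl w hw) (by omega))
  have := le_gPd hne
  omega

lemma IsInducedCycle.gBetti_eq_zero_of_isolated (hf : IsInducedCycle Gᶜ f) (hl : 3 < l)
    (hiso : ∀ v ∉ cycleVertices f, ∀ w, ¬G.Adj v w) (hi : i + 4 = l) (hij : i + 2 < j) :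
    gBetti K G i j = 0 := by
  refine gBetti_eq_zero_iff.2 fun W hW => ?_
  by_cases hWC : W ⊆ cycleVertices f
  · obtain rfl | hne := eq_or_ne W (cycleVertices f)
    · exact hf.exactAt_complFaces_cycleVertices hl hi
    · obtain ⟨v, hv, hvW⟩ := exists_of_ssubset (hWC.ssubset_of_ne hne)
      obtain ⟨k, rfl⟩ := mem_cycleVertices.1 hv
      have hW' : W = (cycleVertices f).erase (f k) :=
        eq_of_subset_of_card_le (subset_erase.2 ⟨hWC, hvW⟩) (by
          rw [card_erase_of_mem hv, hf.card_cycleVertices]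
          omega)
      exact hW' ▸ hf.exactAt_complFaces_erase k (i + 1)
  · obtain ⟨v, hv, hvC⟩ := not_subset.1 hWC
    exact exactAt_complFaces_flagComplex_of_forall_adj hv (fun w hwv =>
      (SimpleGraph.compl_adj ..).2 ⟨hwv, fun hadj => hiso v hvC w hadj.symm⟩) (i + 1)

end EdgeIdeals

end EP

/-- If the edge ideal `I(G)` has almost maximal finite index, then every
induced cycle of length greater than `3` in the complement of `G` has length exactly
`index(I(G)) + 3`. -/
theorem statement6 (K : Type) [Field K] (n : ℕ) (G : SimpleGraph (Fin n))
    (h : EP.AMFI K G) (l : ℕ) (hl : 3 < l) (hc : EP.HasInducedCycle Gᶜ l) :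
    (l : ℕ∞) = EP.gIndex K G + 3 := by
  obtain ⟨f, hinj, hadj⟩ := hc
  have hf : EP.IsInducedCycle Gᶜ f := ⟨hinj, hadj⟩
  have : NeZero l := ⟨by omega⟩
  obtain ⟨t, j, hindex, hj, hattained⟩ := EP.exists_gIndex_eq h.gIndex_ne_top
  have hpd : t + 1 = EP.gPd K G := by
    rw [EP.AMFI, hindex] at h
    exact_mod_cast h
  have hcycle : EP.gBetti K G (l - 3) l ≠ 0 := hf.gBetti_ne_zero hl (by omega)
  have hlower : t ≤ l - 3 := by exact_mod_cast hindex ▸ EP.gIndex_le (by omega) hcycle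
  have hupper : l - 3 ≤ t + 1 := hpd ▸ EP.le_gPd hcycle
  have hne : l ≠ t + 4 := fun hlt => hattained <|
    hf.gBetti_eq_zero_of_isolated hl
      (fun v hv => hf.not_adj_of_notMem_cycleVertices (K := K) hl (by omega) hv) hlt.symm hj
  rw [hindex]
  norm_cast
  omega
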